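/- arXiv:1811.00977 — 2 statements merged into one kernel-verified Lean document; each statement's English description precedes it below -/
import Mathlib

section
/- Let p be an odd prime, G a finite powerful p-group, and i ≥ 2. Then [Ω_i(G^p), Ω_i(G^p)] ≤ (Ω_i(G^{p²}))^p; that is, the chain Ω_i(G^p) ≥ Ω_i(G^{p²}) ≥ (Ω_i(G^{p²}))^p ≥ ⋯ ≥ (Ω_i(G^{p²}))^{p^{i-2}} ≥ {1} is a powerfully central chain of Ω_i(G^p). -/
/-!
Let `G` be a powerful `p`-group, `p` odd. Every element of `G ^ (p ^ k)` is a `p ^ k`-th power, so a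
commutator of `x ∈ G ^ (p ^ r)` and `y ∈ G ^ (p ^ t)`, which lies in `G ^ (p ^ (r + t + 1))`, is the
`p ^ r`-th power of some `v ∈ G ^ (p ^ (t + 1))`. It remains to see that `v` has small order. This
follows from two order bounds: the elements killed by `p ^ i` form a subgroup, and if `a`, `b` are
killed by `p ^ (i + 1)` and `p ^ i`, then `[a ^ (p ^ j), b ^ (p ^ k)]` is killed by
`p ^ (i - j - k)`.

Both bounds are proved together by induction on `|G|`. If `G` is not abelian, they hold in the
proper subgroups `⟨h⟩ G ^ p` and in the proper quotient `G / Ω_1(G ^ p)`. Lifting them from the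
quotient leaves commutators lying in `Ω_1(G ^ p)`, an abelian group of exponent `p`; such a
commutator commutes with the relevant elements by the bounds in a subgroup `⟨h⟩ G ^ p`, and for odd
`p` the `p`-th power map then behaves as in an abelian group.
-/


/-- The subgroup generated by the `n`-th powers of the elements of `H`. -/
def subgroupPow {G : Type*} [Group G] (H : Subgroup G) (n : ℕ) : Subgroup G :=
  Subgroup.closure {x | ∃ h ∈ H, h ^ n = x}

/-- `Ω_i(H)`: the subgroup generated by the elements of `H` whose order divides `p ^ i`. -/
def omegaSubgroup {G : Type*} [Group G] (p i : ℕ) (H : Subgroup G) : Subgroup G :=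
  Subgroup.closure {x | x ∈ H ∧ x ^ p ^ i = 1}

/-- A finite `p`-group `G` is powerful if `[G,G] ≤ G^p` when `p` is odd,
and `[G,G] ≤ G^4` when `p = 2`. -/
def IsPowerful (p : ℕ) (G : Type*) [Group G] : Prop :=
  if p = 2 then commutator G ≤ subgroupPow (⊤ : Subgroup G) 4
  else commutator G ≤ subgroupPow (⊤ : Subgroup G) p

/-- The subgroup of `n`-th powers of the whole group is normal (indeed characteristic). -/
instance subgroupPow_top_normal {G : Type*} [Group G] (n : ℕ) :
    (subgroupPow (⊤ : Subgroup G) n).Normal := by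
  constructor
  intro x hx g
  have key : Subgroup.map (MulAut.conj g).toMonoidHom (subgroupPow (⊤ : Subgroup G) n)
      ≤ subgroupPow (⊤ : Subgroup G) n := by
    rw [subgroupPow, MonoidHom.map_closure]
    apply Subgroup.closure_le _ |>.mpr
    rintro y ⟨z, ⟨h, -, rfl⟩, rfl⟩
    exact Subgroup.subset_closure ⟨(MulAut.conj g) h, trivial, by
      simp [((MulAut.conj g).toMonoidHom.map_pow h n).symm]⟩
  have hmem : (MulAut.conj g) x ∈
      Subgroup.map (MulAut.conj g).toMonoidHom (subgroupPow (⊤ : Subgroup G) n) :=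
    Subgroup.mem_map_of_mem _ hx
  simpa [MulAut.conj_apply] using key hmem

/-- A powerfully central chain `{1} = H 0 ≤ H 1 ≤ ⋯ ≤ H n = G` of length `n`:
`[H (k+1), G] ≤ (H k)^p` for all `k < n`. -/
def IsPowerfullyCentralChain (p : ℕ) {G : Type*} [Group G] (n : ℕ) (H : ℕ → Subgroup G) : Prop :=
  H 0 = ⊥ ∧ H n = ⊤ ∧ (∀ k, k < n → H k ≤ H (k + 1)) ∧
    ∀ k, k < n → ⁅H (k + 1), (⊤ : Subgroup G)⁆ ≤ subgroupPow (H k) p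

/-- A group is powerfully nilpotent if it is powerful and admits a powerfully central chain. -/
def IsPowerfullyNilpotent (p : ℕ) (G : Type*) [Group G] : Prop :=
  IsPowerful p G ∧ ∃ (n : ℕ) (H : ℕ → Subgroup G), IsPowerfullyCentralChain p n H

/-- The powerful nilpotency class: the least possible length of a powerfully central chain. -/
noncomputable def powerfulNilpotencyClass (p : ℕ) (G : Type*) [Group G] : ℕ :=
  sInf {n | ∃ H : ℕ → Subgroup G, IsPowerfullyCentralChain p n H}


/-- A powerfully central chain for the subgroup `K` of `G`, of length `n`, with all
subgroups taken inside the ambient group `G`: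
`{1} = H 0 ≤ H 1 ≤ ⋯ ≤ H n = K` and `[H (k+1), K] ≤ (H k)^p` for all `k < n`. -/
def IsPowerfullyCentralChainFor (p : ℕ) {G : Type*} [Group G] (K : Subgroup G) (n : ℕ)
    (H : ℕ → Subgroup G) : Prop :=
  H 0 = ⊥ ∧ H n = K ∧ (∀ k, k < n → H k ≤ H (k + 1)) ∧
    ∀ k, k < n → ⁅H (k + 1), K⁆ ≤ subgroupPow (H k) p

namespace PowerfulPGroup

open scoped commutatorElement

/-! ### Commutators and powers of elements -/

section Elements

variable {G : Type*} [Group G]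

theorem commutator_mem_comm {N : Subgroup G} {x y : G} : ⁅x, y⁆ ∈ N ↔ ⁅y, x⁆ ∈ N := by
  rw [← commutatorElement_inv, inv_mem_iff]

theorem commutator_pow_left {a b : G} (h : Commute ⁅a, b⁆ a) (n : ℕ) :
    ⁅a ^ n, b⁆ = ⁅a, b⁆ ^ n := by
  have conj_inv : b * a⁻¹ * b⁻¹ = a⁻¹ * ⁅a, b⁆ := by rw [commutatorElement_def]; group
  calc ⁅a ^ n, b⁆ = a ^ n * (b * a⁻¹ * b⁻¹) ^ n := by
        rw [conj_pow, inv_pow, commutatorElement_def]; group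
    _ = ⁅a, b⁆ ^ n := by
        rw [conj_inv, h.inv_right.symm.mul_pow, inv_pow, mul_inv_cancel_left]

theorem mul_pow_of_commute_commutator {u v : G} (hu : Commute ⁅v, u⁆ u) (hv : Commute ⁅v, u⁆ v)
    (n : ℕ) : (u * v) ^ n = u ^ n * v ^ n * ⁅v, u⁆ ^ n.choose 2 := by
  have swap (n : ℕ) : v ^ n * u = u * ⁅v, u⁆ ^ n * v ^ n := by
    rw [← (hu.pow_left n).eq, ← commutator_pow_left hv, commutatorElement_def]; group
  induction n with
  | zero => simp
  | succ n ih =>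
    have choose_succ : (n + 1).choose 2 = n + n.choose 2 := by simp [Nat.choose_succ_succ' n 1]
    calc (u * v) ^ (n + 1) = u ^ n * v ^ n * (⁅v, u⁆ ^ n.choose 2 * (u * v)) := by
          rw [pow_succ, ih, mul_assoc]
      _ = u ^ n * (v ^ n * u) * v * ⁅v, u⁆ ^ n.choose 2 := by
          rw [((hu.mul_right hv).pow_left _).eq]; simp only [mul_assoc]
      _ = u ^ n * u * (⁅v, u⁆ ^ n * (v ^ n * v)) * ⁅v, u⁆ ^ n.choose 2 := by
          rw [swap]; simp only [mul_assoc]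
      _ = u ^ (n + 1) * v ^ (n + 1) * ⁅v, u⁆ ^ (n + 1).choose 2 := by
          rw [← pow_succ, ← pow_succ, (hv.pow_pow n (n + 1)).eq, choose_succ, pow_add ⁅v, u⁆]
          simp only [mul_assoc]

theorem pow_choose_two_eq_one {n : ℕ} (hn : Odd n) {z : G} (hz : z ^ n = 1) :
    z ^ n.choose 2 = 1 := by
  obtain ⟨k, hk⟩ := hn
  have choose_two : n.choose 2 = n * k := by
    rw [Nat.choose_two_right, hk, Nat.add_sub_cancel, mul_left_comm,
      Nat.mul_div_cancel_left _ two_pos]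
  rw [choose_two, pow_mul, hz, one_pow]

theorem mul_pow_of_odd {n : ℕ} (hn : Odd n) {u v : G} (hu : Commute ⁅v, u⁆ u)
    (hv : Commute ⁅v, u⁆ v) (hz : ⁅v, u⁆ ^ n = 1) : (u * v) ^ n = u ^ n * v ^ n := by
  rw [mul_pow_of_commute_commutator hu hv, pow_choose_two_eq_one hn hz, mul_one]

/-- This holds because `b * a * b⁻¹ = ⁅a, b⁆⁻¹ * a` is a product of two elements generating a group
of class at most two, in which the `n`-th power is multiplicative. -/
theorem commute_pow_of_commute_commutator {n : ℕ} (hn : Odd n) {a b : G}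
    (hfa : Commute ⁅⁅a, b⁆, a⁆ a) (hfc : Commute ⁅⁅a, b⁆, a⁆ ⁅a, b⁆) (hc : ⁅a, b⁆ ^ n = 1) :
    Commute (a ^ n) b := by
  have conj_eq : b * a * b⁻¹ = ⁅a, b⁆⁻¹ * a := by rw [commutatorElement_def]; group
  have commutator_inv : ⁅a, ⁅a, b⁆⁻¹⁆ = ⁅⁅a, b⁆, a⁆ := by
    rw [commutatorElement_inv_right, mul_assoc, hfc.eq, inv_mul_cancel_left]
  have hf : ⁅⁅a, b⁆, a⁆ ^ n = 1 := by
    rw [← commutator_pow_left hfc, hc, commutatorElement_one_left]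
  have conj_pow_eq : b * a ^ n * b⁻¹ = a ^ n := by
    rw [← conj_pow, conj_eq, mul_pow_of_odd hn (by rw [commutator_inv]; exact hfc.inv_right)
      (by rwa [commutator_inv]) (by rw [commutator_inv, hf]), inv_pow, hc, inv_one, one_mul]
  exact (mul_inv_eq_iff_eq_mul.1 conj_pow_eq).symm

theorem commute_mk_iff (R : Subgroup G) [R.Normal] (x y : G) :
    Commute (x : G ⧸ R) (y : G ⧸ R) ↔ ⁅x, y⁆ ∈ R := by
  rw [← commutatorElement_eq_one_iff_commute, ← QuotientGroup.eq_one_iff]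
  rfl

end Elements

/-! ### Subgroups of powers and omega subgroups -/

section SubgroupPow

variable {G K : Type*} [Group G] [Group K] {n : ℕ}

theorem subgroupPow_le_iff {H L : Subgroup G} : subgroupPow H n ≤ L ↔ ∀ x ∈ H, x ^ n ∈ L := by
  refine (Subgroup.closure_le L).trans ⟨fun h x hx => h ⟨x, hx, rfl⟩, ?_⟩
  rintro h _ ⟨x, hx, rfl⟩
  exact h x hx

theorem pow_mem_subgroupPow {H : Subgroup G} {x : G} (hx : x ∈ H) (n : ℕ) :
    x ^ n ∈ subgroupPow H n :=
  subgroupPow_le_iff.1 le_rfl x hx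

theorem subgroupPow_mono {H L : Subgroup G} (h : H ≤ L) (n : ℕ) :
    subgroupPow H n ≤ subgroupPow L n :=
  subgroupPow_le_iff.2 fun _ hx => pow_mem_subgroupPow (h hx) n

theorem subgroupPow_le_self (H : Subgroup G) (n : ℕ) : subgroupPow H n ≤ H :=
  subgroupPow_le_iff.2 fun _ hx => H.pow_mem hx n

theorem subgroupPow_one (H : Subgroup G) : subgroupPow H 1 = H :=
  le_antisymm (subgroupPow_le_self H 1) fun x hx => by
    simpa only [pow_one] using pow_mem_subgroupPow hx 1

theorem subgroupPow_mul_le (H : Subgroup G) (m n : ℕ) :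
    subgroupPow H (m * n) ≤ subgroupPow (subgroupPow H m) n :=
  subgroupPow_le_iff.2 fun x hx => by
    rw [pow_mul]
    exact pow_mem_subgroupPow (pow_mem_subgroupPow hx m) n

theorem map_subgroupPow (f : G →* K) (H : Subgroup G) (n : ℕ) :
    (subgroupPow H n).map f = subgroupPow (H.map f) n := by
  refine le_antisymm (Subgroup.map_le_iff_le_comap.2 (subgroupPow_le_iff.2 fun x hx => ?_))
    (subgroupPow_le_iff.2 ?_)
  · rw [Subgroup.mem_comap, map_pow]
    exact pow_mem_subgroupPow (Subgroup.mem_map_of_mem f hx) n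
  · rintro _ ⟨x, hx, rfl⟩
    exact ⟨x ^ n, pow_mem_subgroupPow hx n, map_pow f x n⟩

instance subgroupPow_normal (H : Subgroup G) [H.Normal] (n : ℕ) : (subgroupPow H n).Normal :=
  Subgroup.normal_iff_map_conj_eq.2 fun g => by
    rw [map_subgroupPow, Subgroup.Normal.map_conj_eq H g]

/-- If `n`-th powers are multiplicative on the image of `f`, then the image of `G ^ n` consists
of `n`-th powers. -/
theorem exists_map_pow_eq (f : G →* K)
    (hf : ∀ x y : G, (f x * f y) ^ n = f x ^ n * f y ^ n) {g : G}
    (hg : g ∈ subgroupPow (⊤ : Subgroup G) n) : ∃ x : G, f x ^ n = f g := by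
  induction hg using Subgroup.closure_induction with
  | mem g hg =>
    obtain ⟨x, -, rfl⟩ := hg
    exact ⟨x, (map_pow f x n).symm⟩
  | one => exact ⟨1, by simp only [map_one, one_pow]⟩
  | mul g g' _ _ hg hg' =>
    obtain ⟨x, hx⟩ := hg
    obtain ⟨y, hy⟩ := hg'
    exact ⟨x * y, by rw [map_mul, hf, hx, hy, map_mul]⟩
  | inv g _ hg =>
    obtain ⟨x, hx⟩ := hg
    exact ⟨x⁻¹, by rw [map_inv, inv_pow, hx, map_inv]⟩

variable {p i : ℕ}

theorem omegaSubgroup_mono {H L : Subgroup G} (h : H ≤ L) :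
    omegaSubgroup p i H ≤ omegaSubgroup p i L :=
  Subgroup.closure_mono fun _ hx => ⟨h hx.1, hx.2⟩

theorem mem_omegaSubgroup_iff {H : Subgroup G}
    (hmul : ∀ x ∈ H, ∀ y ∈ H, x ^ p ^ i = 1 → y ^ p ^ i = 1 → (x * y) ^ p ^ i = 1) {x : G} :
    x ∈ omegaSubgroup p i H ↔ x ∈ H ∧ x ^ p ^ i = 1 := by
  refine ⟨fun hx => ?_, fun hx => Subgroup.subset_closure hx⟩
  induction hx using Subgroup.closure_induction with
  | mem _ hx => exact hx
  | one => exact ⟨H.one_mem, one_pow _⟩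
  | mul _ _ _ _ hx hy => exact ⟨H.mul_mem hx.1 hy.1, hmul _ hx.1 _ hy.1 hx.2 hy.2⟩
  | inv _ _ hx => exact ⟨H.inv_mem hx.1, by rw [inv_pow, hx.2, inv_one]⟩

instance omegaSubgroup_normal (p i : ℕ) (H : Subgroup G) [H.Normal] :
    (omegaSubgroup p i H).Normal := by
  refine Subgroup.normalizer_eq_top_iff.1 (top_le_iff.1 ?_)
  refine Subgroup.le_normalizer_closure_iff.2 fun g _ x hx => Subgroup.subset_closure ?_
  exact ⟨Subgroup.Normal.conj_mem ‹_› x hx.1 g, by rw [conj_pow, hx.2, mul_one, mul_inv_cancel]⟩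

end SubgroupPow

/-! ### Powerfully embedded subgroups -/

section PowerfullyEmbedded

variable {G K : Type*} [Group G] [Group K] {n : ℕ}

theorem commutator_le_iff_le_comap_centralizer {H L R : Subgroup G} [R.Normal] :
    ⁅H, L⁆ ≤ R ↔
      H ≤ (Subgroup.centralizer (L.map (QuotientGroup.mk' R))).comap (QuotientGroup.mk' R) := by
  rw [← Subgroup.map_le_iff_le_comap, ← Subgroup.commutator_eq_bot_iff_le_centralizer,
    ← Subgroup.map_commutator, Subgroup.map_eq_bot_iff, QuotientGroup.ker_mk']

theorem sup_commutator_le_iff {H₁ H₂ L R : Subgroup G} [R.Normal] :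
    ⁅H₁ ⊔ H₂, L⁆ ≤ R ↔ ⁅H₁, L⁆ ≤ R ∧ ⁅H₂, L⁆ ≤ R := by
  simp only [commutator_le_iff_le_comap_centralizer, sup_le_iff]

theorem subgroupPow_commutator_le {H L R : Subgroup G} [R.Normal]
    (h : ∀ u ∈ H, ∀ x ∈ L, ⁅u ^ n, x⁆ ∈ R) : ⁅subgroupPow H n, L⁆ ≤ R := by
  refine commutator_le_iff_le_comap_centralizer.2 (subgroupPow_le_iff.2 fun u hu => ?_)
  rintro _ ⟨x, hx, rfl⟩
  exact ((commute_mk_iff R (u ^ n) x).2 (h u hu x hx)).symm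

/-- In the quotient by `R` the condition reads `K ≤ ⁅K, ⊤⁆`, so `K` lies in every term of the
lower central series. -/
theorem le_of_le_sup_commutator [Group.IsNilpotent G] {K R : Subgroup G} [R.Normal]
    (h : K ≤ R ⊔ ⁅K, ⊤⁆) : K ≤ R := by
  have le_sup_lowerCentralSeries (m : ℕ) : K ≤ R ⊔ (⊤ : Subgroup G).lowerCentralSeries m := by
    induction m with
    | zero => simp only [Subgroup.lowerCentralSeries_zero, le_top, sup_of_le_right]
    | succ m ih =>
      refine h.trans (sup_le le_sup_left ?_)
      refine (Subgroup.commutator_mono ih le_rfl).trans (sup_commutator_le_iff.2 ⟨?_, le_sup_right⟩)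
      exact (Subgroup.commutator_le_left R ⊤).trans le_sup_left
  obtain ⟨m, hm⟩ := Subgroup.nilpotent_iff_lowerCentralSeries.1 ‹Group.IsNilpotent G›
  simpa only [hm, sup_bot_eq] using le_sup_lowerCentralSeries m

/-- `N` is powerfully embedded in `G` (with respect to the exponent `n`) if `[N, G] ≤ N ^ n`. For
odd `n = p`, a `p`-group is powerful if and only if it is powerfully embedded in itself. -/
def IsPowerfullyEmbedded (n : ℕ) (N : Subgroup G) : Prop :=
  ⁅N, (⊤ : Subgroup G)⁆ ≤ subgroupPow N n

theorem IsPowerfullyEmbedded.map {N : Subgroup G} (hN : IsPowerfullyEmbedded n N) {f : G →* K}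
    (hf : Function.Surjective f) : IsPowerfullyEmbedded n (N.map f) := by
  have map_commutator_le := Subgroup.map_mono (f := f) hN
  rwa [Subgroup.map_commutator, map_subgroupPow, Subgroup.map_top_of_surjective f hf]
    at map_commutator_le

theorem IsPowerfullyEmbedded.commutator_subgroupPow_eq_bot (hn : Odd n) {N : Subgroup G}
    [N.Normal] (hN : IsPowerfullyEmbedded n N) (hpow : subgroupPow (subgroupPow N n) n = ⊥)
    (hcomm : ⁅⁅subgroupPow N n, (⊤ : Subgroup G)⁆, (⊤ : Subgroup G)⁆ = ⊥) :
    ⁅subgroupPow N n, (⊤ : Subgroup G)⁆ = ⊥ := by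
  rw [Subgroup.commutator_top_right_eq_bot_iff_le_center] at hcomm
  refine le_bot_iff.1 (subgroupPow_commutator_le fun x hx g hg => ?_)
  have hc : ⁅x, g⁆ ∈ subgroupPow N n := hN (Subgroup.commutator_mem_commutator hx hg)
  have hf : ⁅⁅x, g⁆, x⁆ ∈ Subgroup.center G :=
    hcomm (Subgroup.commutator_mem_commutator hc trivial)
  have commute_all (y : G) : Commute ⁅⁅x, g⁆, x⁆ y := (Subgroup.mem_center_iff.1 hf y).symm
  have hcn : ⁅x, g⁆ ^ n = 1 := by
    rw [← Subgroup.mem_bot, ← hpow]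
    exact pow_mem_subgroupPow hc n
  rw [Subgroup.mem_bot, commutatorElement_eq_one_iff_commute]
  exact commute_pow_of_commute_commutator hn (commute_all x) (commute_all ⁅x, g⁆) hcn

/-- Modulo `(N ^ n) ^ n` and `[N ^ n, G, G]` the group generated by `N` and one more element has
class at most three; nilpotency disposes of the second factor. -/
theorem IsPowerfullyEmbedded.to_subgroupPow [Group.IsNilpotent G] (hn : Odd n) {N : Subgroup G}
    [N.Normal] (hN : IsPowerfullyEmbedded n N) : IsPowerfullyEmbedded n (subgroupPow N n) := by
  set P := subgroupPow N n with hP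
  refine le_of_le_sup_commutator ?_
  set S := subgroupPow P n ⊔ ⁅⁅P, (⊤ : Subgroup G)⁆, (⊤ : Subgroup G)⁆
  set f := QuotientGroup.mk' S
  have hf : Function.Surjective f := QuotientGroup.mk'_surjective S
  have map_eq_bot {L : Subgroup G} : L.map f = ⊥ ↔ L ≤ S := by
    rw [Subgroup.map_eq_bot_iff, QuotientGroup.ker_mk']
  have map_normal : (N.map f).Normal := Subgroup.Normal.map ‹_› f hf
  have commutator_map_eq_bot := (hN.map hf).commutator_subgroupPow_eq_bot hn
  simp only [← map_subgroupPow, ← Subgroup.map_top_of_surjective f hf, ← Subgroup.map_commutator,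
    map_eq_bot, ← hP] at commutator_map_eq_bot
  exact commutator_map_eq_bot le_sup_left le_sup_right

/-- The iterated powers `G, G ^ n, (G ^ n) ^ n, …` of the whole group. In a powerful `p`-group with
`n = p` odd, the `k`-th term is the set of `p ^ k`-th powers. -/
def powSeries (n : ℕ) (G : Type*) [Group G] : ℕ → Subgroup G
  | 0 => ⊤
  | k + 1 => subgroupPow (powSeries n G k) n

instance powSeries_normal (n : ℕ) (G : Type*) [Group G] : ∀ k, (powSeries n G k).Normal
  | 0 => Subgroup.normal_of_characteristic ⊤
  | k + 1 => @subgroupPow_normal G _ _ (powSeries_normal n G k) n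

theorem powSeries_antitone (n : ℕ) (G : Type*) [Group G] : Antitone (powSeries n G) :=
  antitone_nat_of_succ_le fun _ => subgroupPow_le_self _ n

theorem isPowerfullyEmbedded_powSeries [Group.IsNilpotent G] (hn : Odd n)
    (hG : IsPowerfullyEmbedded n (⊤ : Subgroup G)) (k : ℕ) :
    IsPowerfullyEmbedded n (powSeries n G k) := by
  induction k with
  | zero => exact hG
  | succ k ih => exact ih.to_subgroupPow hn

theorem commutator_powSeries_le [Group.IsNilpotent G] (hn : Odd n)
    (hG : IsPowerfullyEmbedded n (⊤ : Subgroup G)) (j k : ℕ) :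
    ⁅powSeries n G j, powSeries n G k⁆ ≤ powSeries n G (j + k + 1) := by
  induction j with
  | zero =>
    rw [zero_add, Subgroup.commutator_comm]
    exact (Subgroup.commutator_mono le_rfl le_top).trans (isPowerfullyEmbedded_powSeries hn hG k)
  | succ j ih =>
    rw [Nat.add_right_comm j 1 k]
    refine subgroupPow_commutator_le fun u hu x hx => ?_
    have hc : ⁅u, x⁆ ∈ powSeries n G (j + k + 1) := ih (Subgroup.commutator_mem_commutator hu hx)
    have hcu : ⁅⁅u, x⁆, u⁆ ∈ powSeries n G (j + k + 1 + 1) :=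
      isPowerfullyEmbedded_powSeries hn hG _ (Subgroup.commutator_mem_commutator hc trivial)
    set R := powSeries n G (j + k + 1 + 1)
    have mk_commute : Commute ⁅(u : G ⧸ R), (x : G ⧸ R)⁆ (u : G ⧸ R) :=
      (commute_mk_iff R ⁅u, x⁆ u).2 hcu
    refine (QuotientGroup.eq_one_iff _).1 ((commutator_pow_left mk_commute n).trans ?_)
    exact (QuotientGroup.eq_one_iff (⁅u, x⁆ ^ n)).2 (pow_mem_subgroupPow hc n)

end PowerfullyEmbedded

section Subgroup

variable {G : Type*} [Group G] {n : ℕ}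

theorem map_subtype_subgroupPow_top (H : Subgroup G) (n : ℕ) :
    (subgroupPow (⊤ : Subgroup H) n).map H.subtype = subgroupPow H n := by
  rw [map_subgroupPow, ← MonoidHom.range_eq_map, H.range_subtype]

theorem isPowerfullyEmbedded_top_iff {H : Subgroup G} :
    IsPowerfullyEmbedded n (⊤ : Subgroup H) ↔ ⁅H, H⁆ ≤ subgroupPow H n := by
  rw [IsPowerfullyEmbedded, ← Subgroup.map_le_map_iff_of_injective H.subtype_injective,
    Subgroup.map_commutator, map_subtype_subgroupPow_top, ← MonoidHom.range_eq_map, H.range_subtype]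

/-- The subgroup `⟨h⟩ G ^ n`. It is powerful when `G` is, and contains `G ^ n` and `h`, which makes
it the group to which induction on the order is applied. -/
def adjoinPow (n : ℕ) (h : G) : Subgroup G :=
  Subgroup.zpowers h ⊔ powSeries n G 1

theorem mem_adjoinPow_self (n : ℕ) (h : G) : h ∈ adjoinPow n h :=
  Subgroup.mem_sup_left (Subgroup.mem_zpowers h)

theorem powSeries_one_le_adjoinPow (n : ℕ) (h : G) : powSeries n G 1 ≤ adjoinPow n h :=
  le_sup_right

theorem conj_mem_adjoinPow (hG : IsPowerfullyEmbedded n (⊤ : Subgroup G)) (h g : G) :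
    g * h * g⁻¹ ∈ adjoinPow n h := by
  have conj_eq : g * h * g⁻¹ = ⁅g, h⁆ * h := by rw [commutatorElement_def]; group
  rw [conj_eq]
  exact mul_mem (powSeries_one_le_adjoinPow n h (hG (Subgroup.commutator_mem_commutator
    trivial trivial))) (mem_adjoinPow_self n h)

theorem isPowerfullyEmbedded_adjoinPow [Group.IsNilpotent G] (hn : Odd n)
    (hG : IsPowerfullyEmbedded n (⊤ : Subgroup G)) (h : G) :
    IsPowerfullyEmbedded n (⊤ : Subgroup (adjoinPow n h)) := by
  have commutator_powSeries_one_le (L : Subgroup G) : ⁅powSeries n G 1, L⁆ ≤ powSeries n G 2 :=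
    (Subgroup.commutator_mono le_rfl le_top).trans (commutator_powSeries_le hn hG 1 0)
  rw [isPowerfullyEmbedded_top_iff]
  calc ⁅adjoinPow n h, adjoinPow n h⁆
      ≤ powSeries n G 2 := by
        refine sup_commutator_le_iff.2 ⟨?_, commutator_powSeries_one_le _⟩
        rw [Subgroup.commutator_comm]
        refine sup_commutator_le_iff.2 ⟨?_, commutator_powSeries_one_le _⟩
        exact (Subgroup.commutator_self_eq_bot_iff.2 inferInstance).trans_le bot_le
    _ ≤ subgroupPow (adjoinPow n h) n := subgroupPow_mono (powSeries_one_le_adjoinPow n h) n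

end Subgroup

/-! ### Roots in powerful `p`-groups -/

theorem card_lt_card_of_ne_top {G : Type*} [Group G] [Finite G] {H : Subgroup G} (h : H ≠ ⊤) :
    Nat.card H < Nat.card G :=
  (Subgroup.card_le_card_group H).lt_of_ne fun e => h (Subgroup.eq_top_of_card_eq H e)

theorem card_quotient_lt_card_of_ne_bot {G : Type*} [Group G] [Finite G] {N : Subgroup G}
    (h : N ≠ ⊥) : Nat.card (G ⧸ N) < Nat.card G := by
  rw [N.card_eq_card_quotient_mul_card_subgroup]
  exact lt_mul_of_one_lt_right Nat.card_pos (N.one_lt_card_iff_ne_bot.2 h)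

section Frattini

variable {G : Type*} [Group G] [Finite G] {p : ℕ} [Fact p.Prime]

theorem index_eq_of_isCoatom (hG : IsPGroup p G) {K : Subgroup G} (hK : IsCoatom K) :
    K.index = p := by
  have hp : p.Prime := Fact.out
  obtain ⟨n, hn⟩ := (hG.to_subgroup K).exists_card_eq
  obtain ⟨m, hm⟩ := hG.index K
  have hm0 : m ≠ 0 := fun h => hK.1 (Subgroup.index_eq_one.1 (by rw [hm, h, pow_zero]))
  have dvd_card : p ^ (n + 1) ∣ Nat.card G := by
    rw [← K.card_mul_index, hn, hm, pow_succ]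
    exact mul_dvd_mul_left _ (dvd_pow_self p hm0)
  obtain ⟨L, hL, hKL⟩ := Sylow.exists_subgroup_card_pow_succ dvd_card hn
  rcases hK.le_iff.1 hKL with rfl | rfl
  · refine Nat.eq_of_mul_eq_mul_left (pow_pos hp.pos n) ?_
    rw [← hn, Subgroup.card_mul_index, ← Subgroup.card_top, hL, pow_succ, hn]
  · exact absurd (Nat.pow_right_injective hp.two_le (hn.symm.trans hL)) n.lt_succ_self.ne

theorem subgroupPow_top_le_frattini (hG : IsPGroup p G) :
    subgroupPow (⊤ : Subgroup G) p ≤ frattini G := by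
  have := hG.isNilpotent
  refine le_iInf₂ fun K hK => subgroupPow_le_iff.2 fun x _ => ?_
  have : K.Normal :=
    Subgroup.NormalizerCondition.normal_of_coatom K Group.normalizerCondition_of_isNilpotent hK
  rw [← index_eq_of_isCoatom hG hK]
  exact K.pow_index_mem x

theorem commute_of_adjoinPow_eq_top (hG : IsPGroup p G) {h : G} (htop : adjoinPow p h = ⊤)
    (x y : G) : Commute x y := by
  have zpowers_eq_top : Subgroup.zpowers h = ⊤ := frattini_nongenerating
    (top_le_iff.1 (htop.ge.trans (sup_le_sup_left (subgroupPow_top_le_frattini hG) _)))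
  obtain ⟨m, rfl⟩ := Subgroup.mem_zpowers_iff.1 (zpowers_eq_top ▸ Subgroup.mem_top x)
  obtain ⟨n, rfl⟩ := Subgroup.mem_zpowers_iff.1 (zpowers_eq_top ▸ Subgroup.mem_top y)
  exact (Commute.refl h).zpow_zpow m n

end Frattini

/-- A powerful `p`-group for an odd number `p`; since `p` is odd, `IsPowerful` amounts to the group
being powerfully embedded in itself. Finiteness is assumed separately where it is needed. -/
structure IsOddPowerfulPGroup (p : ℕ) (G : Type*) [Group G] : Prop where
  odd : Odd p
  isPGroup : IsPGroup p G
  powerful : IsPowerfullyEmbedded p (⊤ : Subgroup G)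

namespace IsOddPowerfulPGroup

variable {G : Type*} [Group G] {p : ℕ}

theorem to_quotient (hG : IsOddPowerfulPGroup p G) (N : Subgroup G) [N.Normal] :
    IsOddPowerfulPGroup p (G ⧸ N) where
  odd := hG.odd
  isPGroup := hG.isPGroup.to_quotient N
  powerful := by
    have hN := QuotientGroup.mk'_surjective N
    simpa only [Subgroup.map_top_of_surjective _ hN] using hG.powerful.map hN

theorem to_subgroup (hG : IsOddPowerfulPGroup p G) {H : Subgroup G}
    (hH : IsPowerfullyEmbedded p (⊤ : Subgroup H)) : IsOddPowerfulPGroup p H :=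
  ⟨hG.odd, hG.isPGroup.to_subgroup H, hH⟩

variable [Finite G] [Fact p.Prime]

theorem commutator_powSeries_le (hG : IsOddPowerfulPGroup p G) (j k : ℕ) :
    ⁅powSeries p G j, powSeries p G k⁆ ≤ powSeries p G (j + k + 1) :=
  have := hG.isPGroup.isNilpotent
  PowerfulPGroup.commutator_powSeries_le hG.odd hG.powerful j k

theorem commutator_mem_powSeries (hG : IsOddPowerfulPGroup p G) {j k : ℕ} {x y : G}
    (hx : x ∈ powSeries p G j) (hy : y ∈ powSeries p G k) :
    ⁅x, y⁆ ∈ powSeries p G (j + k + 1) :=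
  hG.commutator_powSeries_le j k (Subgroup.commutator_mem_commutator hx hy)

theorem to_adjoinPow (hG : IsOddPowerfulPGroup p G) (h : G) :
    IsOddPowerfulPGroup p (adjoinPow p h) :=
  have := hG.isPGroup.isNilpotent
  hG.to_subgroup (isPowerfullyEmbedded_adjoinPow hG.odd hG.powerful h)

theorem to_powSeries (hG : IsOddPowerfulPGroup p G) (k : ℕ) :
    IsOddPowerfulPGroup p (powSeries p G k) :=
  have := hG.isPGroup.isNilpotent
  hG.to_subgroup (isPowerfullyEmbedded_top_iff.2 ((Subgroup.commutator_mono le_rfl le_top).trans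
    (isPowerfullyEmbedded_powSeries hG.odd hG.powerful k)))

theorem mk_mul_pow (hG : IsOddPowerfulPGroup p G) (x y : G) :
    ((x : G ⧸ powSeries p G 2) * y) ^ p =
      (x : G ⧸ powSeries p G 2) ^ p * (y : G ⧸ powSeries p G 2) ^ p := by
  set R := powSeries p G 2
  have hc : ⁅y, x⁆ ∈ powSeries p G 1 :=
    hG.commutator_mem_powSeries (j := 0) (k := 0) trivial trivial
  have mk_commute (g : G) : Commute ⁅(y : G ⧸ R), (x : G ⧸ R)⁆ (g : G ⧸ R) :=
    (commute_mk_iff R ⁅y, x⁆ g).2 (hG.commutator_mem_powSeries (k := 0) hc trivial)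
  exact mul_pow_of_odd hG.odd (mk_commute x) (mk_commute y)
    ((QuotientGroup.eq_one_iff (⁅y, x⁆ ^ p)).2 (pow_mem_subgroupPow hc p))

/-- The `p`-th power of some `x` is congruent to `g` modulo `(G ^ p) ^ p`, so `g` lies in the
subgroup generated by the `p`-th powers of the elements of `⟨x⟩ G ^ p`. -/
theorem exists_pow_eq (hG : IsOddPowerfulPGroup p G) {g : G}
    (hg : g ∈ subgroupPow (⊤ : Subgroup G) p) : ∃ x : G, x ^ p = g := by
  induction hn : Nat.card G using Nat.strong_induction_on generalizing G with
  | _ n ih =>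
    obtain ⟨x, hx⟩ := exists_map_pow_eq (QuotientGroup.mk' (powSeries p G 2))
      hG.mk_mul_pow hg
    by_cases htop : adjoinPow p x = ⊤
    · have commute_all := commute_of_adjoinPow_eq_top hG.isPGroup htop
      exact exists_map_pow_eq (MonoidHom.id G) (fun x y => (commute_all x y).mul_pow p) hg
    have inv_mul_mem : (x ^ p)⁻¹ * g ∈ powSeries p G 2 := QuotientGroup.eq.1 hx
    have g_mem : g ∈ subgroupPow (adjoinPow p x) p := by
      rw [← mul_inv_cancel_left (x ^ p) g]
      exact mul_mem (pow_mem_subgroupPow (mem_adjoinPow_self p x) p)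
        (subgroupPow_mono (powSeries_one_le_adjoinPow p x) p inv_mul_mem)
    rw [← map_subtype_subgroupPow_top] at g_mem
    obtain ⟨g, g_mem, rfl⟩ := g_mem
    obtain ⟨t, ht⟩ := ih _ (hn ▸ card_lt_card_of_ne_top htop) (hG.to_adjoinPow x) g_mem rfl
    exact ⟨t, congrArg Subtype.val ht⟩

theorem mem_powSeries_iff (hG : IsOddPowerfulPGroup p G) {k : ℕ} {x : G} :
    x ∈ powSeries p G k ↔ ∃ g : G, g ^ p ^ k = x := by
  induction k generalizing x with
  | zero => simp only [powSeries, Subgroup.mem_top, pow_zero, pow_one, exists_eq]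
  | succ k ih =>
    constructor
    · intro hx
      have x_mem : x ∈ subgroupPow (powSeries p G k) p := hx
      rw [← map_subtype_subgroupPow_top] at x_mem
      obtain ⟨x, x_mem, rfl⟩ := x_mem
      obtain ⟨y, rfl⟩ := (hG.to_powSeries k).exists_pow_eq x_mem
      obtain ⟨g, hg⟩ := ih.1 y.2
      exact ⟨g, by rw [pow_succ, pow_mul, hg]; rfl⟩
    · rintro ⟨g, rfl⟩
      rw [pow_succ, pow_mul]
      exact pow_mem_subgroupPow (ih.2 ⟨g, rfl⟩) p

theorem pow_mem_powSeries (hG : IsOddPowerfulPGroup p G) (g : G) (k : ℕ) :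
    g ^ p ^ k ∈ powSeries p G k :=
  hG.mem_powSeries_iff.2 ⟨g, rfl⟩

theorem subgroupPow_top_eq_powSeries (hG : IsOddPowerfulPGroup p G) (k : ℕ) :
    subgroupPow (⊤ : Subgroup G) (p ^ k) = powSeries p G k := by
  refine le_antisymm (subgroupPow_le_iff.2 fun g _ => hG.pow_mem_powSeries g k) fun x hx => ?_
  obtain ⟨g, rfl⟩ := hG.mem_powSeries_iff.1 hx
  exact pow_mem_subgroupPow (Subgroup.mem_top g) _

end IsOddPowerfulPGroup

/-! ### Orders of products and commutators in powerful `p`-groups -/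

/-- The two order bounds proved simultaneously by induction on the order of a powerful group:
the elements killed by `p ^ i` are closed under products, and if `a`, `b` are killed by
`p ^ (i + 1)` and `p ^ i`, then `⁅a ^ p ^ j, b ^ p ^ k⁆` is killed by `p ^ (i - j - k)`. The last
exponent is a variable `l` with `j + k + l = i`, so that no truncated subtraction occurs. -/
structure OmegaBounds (p : ℕ) (G : Type*) [Group G] : Prop where
  mul : ∀ {i : ℕ} {x y : G}, x ^ p ^ i = 1 → y ^ p ^ i = 1 → (x * y) ^ p ^ i = 1
  comm : ∀ {i j k l : ℕ} {a b : G}, j + k + l = i → a ^ p ^ (i + 1) = 1 → b ^ p ^ i = 1 →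
    ⁅a ^ p ^ j, b ^ p ^ k⁆ ^ p ^ l = 1

namespace OmegaBounds

variable {p : ℕ} {G : Type*} [Group G]

theorem of_commute (h : ∀ x y : G, Commute x y) : OmegaBounds p G where
  mul hx hy := by rw [(h _ _).mul_pow, hx, hy, one_mul]
  comm _ _ _ := by rw [(h _ _).commutator_eq, one_pow]

theorem commute (h : OmegaBounds p G) {i j k : ℕ} {a b : G} (hi : j + k = i)
    (ha : a ^ p ^ (i + 1) = 1) (hb : b ^ p ^ i = 1) : Commute (a ^ p ^ j) (b ^ p ^ k) := by
  rw [← commutatorElement_eq_one_iff_commute]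
  simpa only [pow_zero, pow_one] using h.comm (l := 0) hi ha hb

theorem mul_pow_eq_one_of_mem {T : Subgroup G} (h : OmegaBounds p T) {i : ℕ} {x y : G}
    (hxT : x ∈ T) (hyT : y ∈ T) (hx : x ^ p ^ i = 1) (hy : y ^ p ^ i = 1) :
    (x * y) ^ p ^ i = 1 :=
  congrArg Subtype.val (h.mul (x := ⟨x, hxT⟩) (y := ⟨y, hyT⟩) (Subtype.ext hx) (Subtype.ext hy))

theorem commute_of_mem {T : Subgroup G} (h : OmegaBounds p T) {i j k : ℕ} {a b : G}
    (haT : a ∈ T) (hbT : b ∈ T) (hi : j + k = i) (ha : a ^ p ^ (i + 1) = 1) (hb : b ^ p ^ i = 1) :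
    Commute (a ^ p ^ j) (b ^ p ^ k) :=
  (h.commute (a := ⟨a, haT⟩) (b := ⟨b, hbT⟩) hi (Subtype.ext ha) (Subtype.ext hb)).map T.subtype

end OmegaBounds

section Step

variable {p : ℕ} {G : Type*} [Group G]

theorem commutator_pow_eq_one (hG : IsPowerfullyEmbedded p (⊤ : Subgroup G)) {x : G}
    (hx : OmegaBounds p (adjoinPow p x)) {i : ℕ} (hxi : x ^ p ^ i = 1) (g : G) :
    ⁅x, g⁆ ^ p ^ i = 1 := by
  have hgx : (g * x * g⁻¹) ^ p ^ i = 1 := by rw [conj_pow, hxi, mul_one, mul_inv_cancel]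
  have commutator_eq : ⁅x, g⁆ = x * (g * x * g⁻¹)⁻¹ := by rw [commutatorElement_def]; group
  rw [commutator_eq]
  exact hx.mul_pow_eq_one_of_mem (mem_adjoinPow_self p x) (inv_mem (conj_mem_adjoinPow hG x g)) hxi
    (by rw [inv_pow, hgx, inv_one])

/-- `Ω_1(G ^ p)`, the normal subgroup modulo which the order bounds are obtained by induction. -/
abbrev omegaOnePow (p : ℕ) (G : Type*) [Group G] : Subgroup G :=
  omegaSubgroup p 1 (powSeries p G 1)

theorem commutator_mem_omegaOnePow (hG : IsPowerfullyEmbedded p (⊤ : Subgroup G)) {x : G}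
    (h : OmegaBounds p (adjoinPow p x)) (hx : x ^ p = 1) (g : G) : ⁅x, g⁆ ∈ omegaOnePow p G :=
  Subgroup.subset_closure ⟨hG (Subgroup.commutator_mem_commutator trivial trivial),
    commutator_pow_eq_one hG h (by rwa [pow_one]) g⟩

theorem mem_omegaOnePow_iff (h : OmegaBounds p (adjoinPow p (1 : G))) {x : G} :
    x ∈ omegaOnePow p G ↔ x ∈ powSeries p G 1 ∧ x ^ p = 1 := by
  have le_adjoinPow := powSeries_one_le_adjoinPow p (1 : G)
  rw [omegaOnePow, mem_omegaSubgroup_iff fun x hx y hy =>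
    h.mul_pow_eq_one_of_mem (le_adjoinPow hx) (le_adjoinPow hy), pow_one]

variable [Finite G] [Fact p.Prime]

theorem omegaOnePow_ne_bot (hG : IsPGroup p G) (h : powSeries p G 1 ≠ ⊥) :
    omegaOnePow p G ≠ ⊥ := by
  have : Nontrivial (powSeries p G 1) := (Subgroup.nontrivial_iff_ne_bot _).2 h
  obtain ⟨n, hn0, hn⟩ := (hG.to_subgroup _).nontrivial_iff_card.1 this
  obtain ⟨z, hz⟩ := exists_prime_orderOf_dvd_card' p (hn ▸ dvd_pow_self p hn0.ne')
  have hzp : (z : G) ^ p ^ 1 = 1 := by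
    rw [pow_one, ← orderOf_dvd_iff_pow_eq_one, Subgroup.orderOf_coe, hz]
  have hz1 : (z : G) ≠ 1 := fun hz1 => by
    rw [← Subgroup.orderOf_coe, hz1, orderOf_one] at hz
    exact (Fact.out : p.Prime).one_lt.ne hz
  exact fun hbot => hz1 (Subgroup.mem_bot.1 (hbot ▸ Subgroup.subset_closure ⟨z.2, hzp⟩))

theorem IsOddPowerfulPGroup.exists_pow_eq_of_mem_powSeries (hG : IsOddPowerfulPGroup p G) {n : ℕ}
    {c : G} (hc : c ∈ powSeries p G (n + 1)) (hcp : c ^ p = 1) :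
    ∃ e ∈ powSeries p G 1, e ^ p ^ n = c ∧ e ^ p ^ (n + 1) = 1 := by
  obtain ⟨g, rfl⟩ := hG.mem_powSeries_iff.1 hc
  refine ⟨g ^ p, pow_mem_subgroupPow (Subgroup.mem_top g) p, ?_, ?_⟩
  · rw [← pow_mul, ← pow_succ']
  · rw [← pow_mul, ← pow_succ', pow_succ, pow_mul, hcp]

variable (hG : IsOddPowerfulPGroup p G) (hadj : ∀ h : G, OmegaBounds p (adjoinPow p h))
include hG hadj

theorem commute_of_mem_omegaOnePow {x y : G} (hx : x ∈ omegaOnePow p G)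
    (hy : y ∈ omegaOnePow p G) : Commute x y := by
  rw [mem_omegaOnePow_iff (hadj 1)] at hx hy
  obtain ⟨h, rfl⟩ := hG.mem_powSeries_iff.1 hx.1
  have hh : h ^ p ^ (1 + 1) = 1 := by rw [pow_succ, pow_mul, hx.2]
  simpa only [pow_zero, pow_one] using (hadj h).commute_of_mem (i := 1) (j := 1) (k := 0)
    (mem_adjoinPow_self p h) (powSeries_one_le_adjoinPow p h hy.1) rfl hh (by rw [pow_one, hy.2])

theorem mk_pow_eq_one {n : ℕ} {x : G} (hx : x ^ p ^ (n + 2) = 1) :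
    (x : G ⧸ omegaOnePow p G) ^ p ^ (n + 1) = 1 := by
  refine (QuotientGroup.eq_one_iff (x ^ p ^ (n + 1))).2 ((mem_omegaOnePow_iff (hadj 1)).2 ⟨?_, ?_⟩)
  · exact powSeries_antitone p G (Nat.le_add_left 1 n) (hG.pow_mem_powSeries x (n + 1))
  · rw [← pow_mul, ← pow_succ, hx]

variable (hquot : OmegaBounds p (G ⧸ omegaOnePow p G))
include hquot

theorem commutator_pow_mem_omegaOnePow {i j k l : ℕ} {a b : G} (hi : j + k + l = i)
    (ha : a ^ p ^ (i + 2) = 1) (hb : b ^ p ^ (i + 1) = 1) :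
    ⁅a ^ p ^ j, b ^ p ^ k⁆ ^ p ^ l ∈ omegaOnePow p G := by
  cases i with
  | zero =>
    obtain ⟨⟨rfl, rfl⟩, rfl⟩ : (j = 0 ∧ k = 0) ∧ l = 0 := by omega
    rw [zero_add, pow_one] at hb
    simp only [pow_zero, pow_one]
    exact commutator_mem_comm.1 (commutator_mem_omegaOnePow hG.powerful (hadj b) hb a)
  | succ i =>
    exact (QuotientGroup.eq_one_iff _).1
      (hquot.comm hi (mk_pow_eq_one hG hadj ha) (mk_pow_eq_one hG hadj hb))

theorem commute_pow_pow_succ {i j k : ℕ} {a b : G} (hi : j + k = i)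
    (ha : a ^ p ^ (i + 2) = 1) (hb : b ^ p ^ (i + 1) = 1) :
    Commute (a ^ p ^ j) (b ^ p ^ (k + 1)) := by
  set c := ⁅b ^ p ^ k, a ^ p ^ j⁆ with hc
  have hcM : c ∈ omegaOnePow p G := by
    rw [hc, commutator_mem_comm]
    simpa only [pow_zero, pow_one] using
      commutator_pow_mem_omegaOnePow hG hadj hquot (l := 0) hi ha hb
  have hcP : c ∈ powSeries p G (k + j + 1) :=
    hG.commutator_mem_powSeries (hG.pow_mem_powSeries b k) (hG.pow_mem_powSeries a j)
  have hcp : c ^ p = 1 := ((mem_omegaOnePow_iff (hadj 1)).1 hcM).2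
  set f := ⁅c, b ^ p ^ k⁆
  have hfM : f ∈ omegaOnePow p G := commutator_mem_omegaOnePow hG.powerful (hadj _) hcp _
  have hfP : f ∈ powSeries p G (i + 1 + 1) := powSeries_antitone p G (by omega)
    (hG.commutator_mem_powSeries hcP (hG.pow_mem_powSeries b k))
  obtain ⟨e, he, hef, hep⟩ := hG.exists_pow_eq_of_mem_powSeries hfP
    ((mem_omegaOnePow_iff (hadj 1)).1 hfM).2
  have hfb : Commute f b := by
    simpa only [pow_zero, pow_one, hef] using (hadj b).commute_of_mem (j := i + 1) (k := 0)
      (powSeries_one_le_adjoinPow p b he) (mem_adjoinPow_self p b) rfl hep hb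
  rw [pow_succ, pow_mul]
  exact (commute_pow_of_commute_commutator hG.odd (hfb.pow_right _)
    (commute_of_mem_omegaOnePow hG hadj hfM hcM) hcp).symm

theorem pow_commute_of_two_le {n : ℕ} {a b : G} (ha : a ^ p ^ (n + 3) = 1)
    (hb : b ^ p ^ (n + 2) = 1) : Commute (a ^ p ^ (n + 2)) b := by
  set c := ⁅a ^ p ^ (n + 1), b⁆ with hc
  have hcM : c ∈ omegaOnePow p G := by
    simpa only [pow_zero, pow_one] using
      commutator_pow_mem_omegaOnePow hG hadj hquot (j := n + 1) (k := 0) (l := 0) rfl ha hb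
  have hcp : c ^ p = 1 := ((mem_omegaOnePow_iff (hadj 1)).1 hcM).2
  have hcP : c ∈ powSeries p G (n + 1 + 1) :=
    hG.commutator_mem_powSeries (k := 0) (hG.pow_mem_powSeries a (n + 1)) trivial
  obtain ⟨e, he, hec, hep⟩ := hG.exists_pow_eq_of_mem_powSeries hcP hcp
  have hac : Commute (a ^ p) c := by
    simpa only [pow_one, hec] using (hadj a).commute_of_mem (j := 1) (k := n + 1)
      (mem_adjoinPow_self p a) (powSeries_one_le_adjoinPow p a he) (Nat.add_comm 1 (n + 1)) ha hep
  have hca : Commute c (a ^ p ^ (n + 1)) := by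
    rw [pow_succ', pow_mul]
    exact (hac.pow_left _).symm
  rw [← commutatorElement_eq_one_iff_commute, pow_succ, pow_mul, commutator_pow_left hca, ← hc, hcp]

/-- The commutator `⁅⁅a, b⁆, a⁆` lies in `G ^ p ^ 2`, so it commutes with `a` by
`pow_commute_of_two_le`. -/
theorem pow_commute_of_pow_eq_one {a b : G} (ha : a ^ p ^ 2 = 1) (hb : b ^ p = 1) :
    Commute (a ^ p) b := by
  have hcM : ⁅a, b⁆ ∈ omegaOnePow p G :=
    commutator_mem_comm.1 (commutator_mem_omegaOnePow hG.powerful (hadj b) hb a)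
  obtain ⟨hcP, hcp⟩ := (mem_omegaOnePow_iff (hadj 1)).1 hcM
  have hfM : ⁅⁅a, b⁆, a⁆ ∈ omegaOnePow p G := commutator_mem_omegaOnePow hG.powerful (hadj _) hcp a
  have hfP : ⁅⁅a, b⁆, a⁆ ∈ powSeries p G 2 := hG.commutator_mem_powSeries (k := 0) hcP trivial
  obtain ⟨d, hd⟩ := hG.mem_powSeries_iff.1 hfP
  have hdp : d ^ p ^ 3 = 1 := by
    rw [pow_succ, pow_mul, hd, ((mem_omegaOnePow_iff (hadj 1)).1 hfM).2]
  have hfa : Commute ⁅⁅a, b⁆, a⁆ a := hd ▸ pow_commute_of_two_le hG hadj hquot (n := 0) hdp ha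
  exact commute_pow_of_commute_commutator hG.odd hfa
    (commute_of_mem_omegaOnePow hG hadj hfM hcM) hcp

theorem mul_pow_prime_eq_one {x y : G} (hx : x ^ p = 1) (hy : y ^ p = 1) : (x * y) ^ p = 1 := by
  have hcM : ⁅y, x⁆ ∈ omegaOnePow p G := commutator_mem_omegaOnePow hG.powerful (hadj _) hy x
  obtain ⟨hcP, hcp⟩ := (mem_omegaOnePow_iff (hadj 1)).1 hcM
  obtain ⟨d, hd⟩ := hG.mem_powSeries_iff.1 hcP
  rw [pow_one] at hd
  have hdp : d ^ p ^ 2 = 1 := by rw [pow_two, pow_mul, hd, hcp]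
  have hcz {z : G} (hz : z ^ p = 1) : Commute ⁅y, x⁆ z :=
    hd ▸ pow_commute_of_pow_eq_one hG hadj hquot hdp hz
  rw [mul_pow_of_odd hG.odd (hcz hx) (hcz hy) hcp, hx, hy, one_mul]

theorem OmegaBounds.of_adjoinPow_of_quotient : OmegaBounds p G where
  mul {i x y} hx hy := by
    match i with
    | 0 => simp_all only [pow_zero, pow_one, one_mul]
    | 1 =>
      rw [pow_one] at *
      exact mul_pow_prime_eq_one hG hadj hquot hx hy
    | i + 2 =>
      have mk_mul_pow := hquot.mul (mk_pow_eq_one hG hadj hx) (mk_pow_eq_one hG hadj hy)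
      have mul_pow_mem : (x * y) ^ p ^ (i + 1) ∈ omegaOnePow p G :=
        (QuotientGroup.eq_one_iff _).1 mk_mul_pow
      rw [pow_succ, pow_mul]
      exact ((mem_omegaOnePow_iff (hadj 1)).1 mul_pow_mem).2
  comm {i j k l a b} hi ha hb := by
    match i, l, k with
    | 0, _, _ =>
      rw [pow_zero, pow_one] at hb
      rw [hb, one_pow, commutatorElement_one_right, one_pow]
    | i + 1, l + 1, k =>
      have hM := commutator_pow_mem_omegaOnePow hG hadj hquot (Nat.succ.inj hi) ha hb
      rw [pow_succ, pow_mul]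
      exact ((mem_omegaOnePow_iff (hadj 1)).1 hM).2
    | i + 1, 0, k + 1 =>
      have hcomm := commute_pow_pow_succ hG hadj hquot (Nat.succ.inj hi) ha hb
      rw [hcomm.commutator_eq, one_pow]
    | 1, 0, 0 =>
      obtain rfl : j = 1 := hi
      rw [pow_one] at hb
      simp only [pow_zero, pow_one]
      exact (pow_commute_of_pow_eq_one hG hadj hquot ha hb).commutator_eq
    | i + 2, 0, 0 =>
      obtain rfl : j = i + 2 := hi
      rw [pow_zero, pow_one, pow_one,
        (pow_commute_of_two_le hG hadj hquot ha hb).commutator_eq]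

end Step

theorem IsOddPowerfulPGroup.omegaBounds {p : ℕ} [Fact p.Prime] {G : Type*} [Group G] [Finite G]
    (hG : IsOddPowerfulPGroup p G) : OmegaBounds p G := by
  induction hn : Nat.card G using Nat.strong_induction_on generalizing G with
  | _ n ih =>
    by_cases hcomm : ∀ x y : G, Commute x y
    · exact .of_commute hcomm
    have hadj (h : G) : OmegaBounds p (adjoinPow p h) :=
      ih _ (hn ▸ card_lt_card_of_ne_top fun htop =>
        hcomm (commute_of_adjoinPow_eq_top hG.isPGroup htop)) (hG.to_adjoinPow h) rfl
    have powSeries_ne_bot : powSeries p G 1 ≠ ⊥ := fun hbot => hcomm fun x y =>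
      commutatorElement_eq_one_iff_commute.1 (Subgroup.mem_bot.1 (hbot ▸ hG.powerful
        (Subgroup.commutator_mem_commutator trivial trivial)))
    have hquot : OmegaBounds p (G ⧸ omegaOnePow p G) :=
      ih _ (hn ▸ card_quotient_lt_card_of_ne_bot (omegaOnePow_ne_bot hG.isPGroup powSeries_ne_bot))
        (hG.to_quotient _) rfl
    exact .of_adjoinPow_of_quotient hG hadj hquot

/-! ### The chain of omega subgroups -/

section Chain

variable {G : Type*} [Group G] {p : ℕ}

namespace OmegaBounds

theorem mem_omegaSubgroup_iff (h : OmegaBounds p G) {i : ℕ} {H : Subgroup G} {x : G} :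
    x ∈ omegaSubgroup p i H ↔ x ∈ H ∧ x ^ p ^ i = 1 :=
  PowerfulPGroup.mem_omegaSubgroup_iff fun _ _ _ _ => h.mul

theorem subgroupPow_omegaSubgroup_eq_bot (h : OmegaBounds p G) (i : ℕ) (H : Subgroup G) :
    subgroupPow (omegaSubgroup p i H) (p ^ i) = ⊥ :=
  le_bot_iff.1 (subgroupPow_le_iff.2 fun _ hx => (h.mem_omegaSubgroup_iff.1 hx).2)

end OmegaBounds

namespace IsOddPowerfulPGroup

variable [Finite G] [Fact p.Prime]

theorem subgroupPow_omegaSubgroup_le (hG : IsOddPowerfulPGroup p G) (i m t : ℕ) :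
    subgroupPow (omegaSubgroup p i (powSeries p G t)) (p ^ m) ≤
      omegaSubgroup p (i - m) (powSeries p G (t + m)) := by
  refine subgroupPow_le_iff.2 fun x hx => Subgroup.subset_closure ?_
  obtain ⟨hxt, hxi⟩ := hG.omegaBounds.mem_omegaSubgroup_iff.1 hx
  obtain ⟨g, rfl⟩ := hG.mem_powSeries_iff.1 hxt
  constructor
  · rw [← pow_mul, ← pow_add]
    exact hG.pow_mem_powSeries g (t + m)
  · rw [← pow_mul, ← pow_add]
    obtain ⟨c, hc⟩ := pow_dvd_pow p (show i ≤ m + (i - m) by omega)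
    rw [hc, pow_mul, hxi, one_pow]

theorem commutator_omegaSubgroup_le (hG : IsOddPowerfulPGroup p G) {i r s t : ℕ}
    (h : r + s ≤ i + t + 1) :
    ⁅omegaSubgroup p s (powSeries p G r), omegaSubgroup p i (powSeries p G t)⁆ ≤
      subgroupPow (omegaSubgroup p i (powSeries p G (t + 1))) (p ^ r) := by
  have hB := hG.omegaBounds
  refine Subgroup.commutator_le.2 fun x hx y hy => ?_
  obtain ⟨hxr, hxs⟩ := hB.mem_omegaSubgroup_iff.1 hx
  obtain ⟨hyt, hyi⟩ := hB.mem_omegaSubgroup_iff.1 hy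
  obtain ⟨w, hw⟩ := hG.mem_powSeries_iff.1 (hG.commutator_mem_powSeries hxr hyt)
  obtain ⟨a, rfl⟩ := hG.mem_powSeries_iff.1 hxr
  obtain ⟨b, rfl⟩ := hG.mem_powSeries_iff.1 hyt
  have ha : a ^ p ^ (i + t + 1) = 1 := by
    obtain ⟨c, hc⟩ := pow_dvd_pow p h
    rw [hc, pow_mul, pow_add, pow_mul, hxs, one_pow]
  have hb : b ^ p ^ (i + t) = 1 := by rw [add_comm, pow_add, pow_mul, hyi]
  rcases le_total r i with hri | hir
  · obtain ⟨l, rfl⟩ := Nat.exists_eq_add_of_le hri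
    have hl := hB.comm (j := r) (k := t) (l := l) (by omega) ha hb
    have hwΩ : w ^ p ^ (t + 1) ∈ omegaSubgroup p (r + l) (powSeries p G (t + 1)) := by
      refine hB.mem_omegaSubgroup_iff.2 ⟨hG.pow_mem_powSeries w (t + 1), ?_⟩
      rw [← hl, ← hw, ← pow_mul, ← pow_mul, ← pow_add, ← pow_add]
      congr 2
      omega
    have commutator_eq : ⁅a ^ p ^ r, b ^ p ^ t⁆ = (w ^ p ^ (t + 1)) ^ p ^ r := by
      rw [← hw, ← pow_mul, ← pow_add]
      congr 2
      omega
    exact commutator_eq ▸ pow_mem_subgroupPow hwΩ (p ^ r)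
  · obtain ⟨c, rfl⟩ := Nat.exists_eq_add_of_le hir
    have hcomm := (hB.commute rfl ha hb).pow_left (p ^ c)
    rw [← pow_mul, ← pow_add] at hcomm
    rw [hcomm.commutator_eq]
    exact one_mem _

end IsOddPowerfulPGroup

/-- The chain `1 ≤ V ^ p ^ (i - 2) ≤ ⋯ ≤ V ^ p ≤ V ≤ W` of length `i`, indexed from the bottom. The
truncated exponent `i - 1 - k` is only reached for `0 < k < i`, where it is the true one, or for
`k > i`, beyond the end of the chain. -/
def powChain (p i : ℕ) (V W : Subgroup G) (k : ℕ) : Subgroup G :=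
  if k = 0 then ⊥ else if k = i then W else subgroupPow V (p ^ (i - 1 - k))

variable {V W : Subgroup G} {i : ℕ}

theorem powChain_zero : powChain p i V W 0 = ⊥ :=
  if_pos rfl

theorem powChain_self (hWi : subgroupPow W (p ^ i) = ⊥) : powChain p i V W i = W := by
  rcases eq_or_ne i 0 with rfl | hi
  · rw [pow_zero, subgroupPow_one] at hWi
    rw [powChain_zero, hWi]
  · rw [powChain, if_neg hi, if_pos rfl]

theorem powChain_of_lt {k : ℕ} (hk : k ≠ 0) (hki : k < i) :
    powChain p i V W k = subgroupPow V (p ^ (i - 1 - k)) := by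
  rw [powChain, if_neg hk, if_neg hki.ne]

theorem subgroupPow_pow_succ_le (V : Subgroup G) (p n : ℕ) :
    subgroupPow V (p ^ (n + 1)) ≤ subgroupPow (subgroupPow V (p ^ n)) p := by
  rw [pow_succ]
  exact subgroupPow_mul_le V (p ^ n) p

theorem powChain_le_succ (hVW : V ≤ W) (hWi : subgroupPow W (p ^ i) = ⊥) {k : ℕ} (hk : k < i) :
    powChain p i V W k ≤ powChain p i V W (k + 1) := by
  rcases eq_or_ne k 0 with rfl | hk0
  · exact powChain_zero.trans_le bot_le
  rw [powChain_of_lt hk0 hk]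
  rcases (Nat.succ_le_of_lt hk).eq_or_lt with rfl | hk'
  · exact ((subgroupPow_le_self V _).trans hVW).trans_eq (powChain_self hWi).symm
  · rw [powChain_of_lt k.succ_ne_zero hk', show i - 1 - k = i - 1 - (k + 1) + 1 by omega]
    exact (subgroupPow_pow_succ_le V p _).trans (subgroupPow_le_self _ p)

theorem subgroupPow_le_subgroupPow_powChain (hVi : subgroupPow V (p ^ i) = ⊥) {k : ℕ}
    (hk : k < i) : subgroupPow V (p ^ (i - k)) ≤ subgroupPow (powChain p i V W k) p := by
  rcases eq_or_ne k 0 with rfl | hk0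
  · exact hVi.trans_le bot_le
  · rw [powChain_of_lt hk0 hk, show i - k = i - 1 - k + 1 by omega]
    exact subgroupPow_pow_succ_le V p _

theorem isPowerfullyCentralChainFor_powChain (hVW : V ≤ W) (hWi : subgroupPow W (p ^ i) = ⊥)
    (hWW : ⁅W, W⁆ ≤ subgroupPow V p)
    (hV : ∀ m, m + 2 ≤ i → ⁅subgroupPow V (p ^ m), W⁆ ≤ subgroupPow V (p ^ (m + 2))) :
    IsPowerfullyCentralChainFor p W i (powChain p i V W) := by
  have hVi : subgroupPow V (p ^ i) = ⊥ := le_bot_iff.1 (hWi ▸ subgroupPow_mono hVW _)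
  refine ⟨powChain_zero, powChain_self hWi, fun k hk => powChain_le_succ hVW hWi hk,
    fun k hk => le_trans ?_ (subgroupPow_le_subgroupPow_powChain hVi hk)⟩
  rcases (Nat.succ_le_of_lt hk).eq_or_lt with rfl | hk'
  · rwa [powChain_self hWi, Nat.succ_eq_add_one, Nat.add_sub_cancel_left, pow_one]
  · rw [powChain_of_lt k.succ_ne_zero hk', show i - k = i - 1 - (k + 1) + 2 by omega]
    exact hV _ (by omega)

end Chain

end PowerfulPGroup

open PowerfulPGroup in
theorem omega_statement_9_general (p : ℕ) (hp : p.Prime) (hp2 : p ≠ 2) (G : Type*) [Group G]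
    [Finite G] (hG : IsPGroup p G) (hpow : IsPowerful p G) (i t : ℕ) (ht : 1 ≤ t)
    (W V : Subgroup G) (hW : W = omegaSubgroup p i (subgroupPow (⊤ : Subgroup G) (p ^ t)))
    (hV : V = omegaSubgroup p i (subgroupPow (⊤ : Subgroup G) (p ^ (t + 1)))) :
    ⁅W, W⁆ ≤ subgroupPow V p ∧
      IsPowerfullyCentralChainFor p W i
        (fun k => if k = 0 then ⊥ else if k = i then W
          else subgroupPow V (p ^ (i - 1 - k))) := by
  have : Fact p.Prime := ⟨hp⟩
  rw [IsPowerful, if_neg hp2] at hpow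
  have hG' : IsOddPowerfulPGroup p G := ⟨hp.odd_of_ne_two hp2, hG, hpow⟩
  rw [hG'.subgroupPow_top_eq_powSeries] at hW hV
  have omega_le {s r k : ℕ} (h : r ≤ k) :
      omegaSubgroup p s (powSeries p G k) ≤ omegaSubgroup p s (powSeries p G r) :=
    omegaSubgroup_mono (powSeries_antitone p G h)
  have hWW : ⁅W, W⁆ ≤ subgroupPow V p := by
    have h := hG'.commutator_omegaSubgroup_le (r := 1) (s := i) (i := i) (t := t) (by omega)
    rw [pow_one, ← hV, ← hW] at h
    exact (Subgroup.commutator_mono (hW ▸ omega_le ht) le_rfl).trans h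
  have hVm (m : ℕ) (hm : m + 2 ≤ i) :
      ⁅subgroupPow V (p ^ m), W⁆ ≤ subgroupPow V (p ^ (m + 2)) := by
    rw [hV, hW]
    refine (Subgroup.commutator_mono ((hG'.subgroupPow_omegaSubgroup_le i m (t + 1)).trans
      (omega_le ?_)) le_rfl).trans (hG'.commutator_omegaSubgroup_le ?_) <;> omega
  have hVW : V ≤ W := by
    rw [hV, hW]
    exact omega_le t.le_succ
  refine ⟨hWW, isPowerfullyCentralChainFor_powChain hVW ?_ hWW hVm⟩
  rw [hW]
  exact hG'.omegaBounds.subgroupPow_omegaSubgroup_eq_bot i _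

theorem omega_statement_9 (p : ℕ) (hp : p.Prime) (hp2 : p ≠ 2) (G : Type*) [Group G]
    [Finite G] (hG : IsPGroup p G) (hpow : IsPowerful p G) (i : ℕ) (hi : 2 ≤ i)
    (W V : Subgroup G) (hW : W = omegaSubgroup p i (subgroupPow (⊤ : Subgroup G) p))
    (hV : V = omegaSubgroup p i (subgroupPow (⊤ : Subgroup G) (p ^ 2))) :
    ⁅W, W⁆ ≤ subgroupPow V p ∧
      IsPowerfullyCentralChainFor p W i
        (fun k => if k = 0 then ⊥ else if k = i then W
          else subgroupPow V (p ^ (i - 1 - k))) :=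
  omega_statement_9_general p hp hp2 G hG hpow i 1 le_rfl W V (by rwa [pow_one]) hV
end

section
/- Let p be an odd prime and G a finite powerful p-group. Then for every i ≥ 1 the subgroup Ω_i(G^p) is powerfully nilpotent, and its powerful nilpotency class is at most i. -/
open Subgroup

open scoped commutatorElement

section ClassTwo

variable {G : Type*} [Group G]

theorem commutatorElement_pow_left {a b : G} (h : Commute ⁅a, b⁆ a) (n : ℕ) :
    ⁅a ^ n, b⁆ = ⁅a, b⁆ ^ n := by
  have hconj : Commute a (b * a⁻¹ * b⁻¹) := by
    have : b * a⁻¹ * b⁻¹ = a⁻¹ * ⁅a, b⁆ := by simp [commutatorElement_def, mul_assoc]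
    rw [this]
    exact (Commute.refl a).inv_right.mul_right h.symm
  have hcomm : ⁅a, b⁆ = a * (b * a⁻¹ * b⁻¹) := by simp [commutatorElement_def, mul_assoc]
  rw [hcomm, hconj.mul_pow, conj_pow, inv_pow]
  simp [commutatorElement_def, mul_assoc]

theorem mul_pow_of_commute_commutator {a b : G} (ha : Commute ⁅b, a⁆ a) (hb : Commute ⁅b, a⁆ b)
    (n : ℕ) : (a * b) ^ n = a ^ n * b ^ n * ⁅b, a⁆ ^ n.choose 2 := by
  have hswap (k : ℕ) : b ^ k * a = a * b ^ k * ⁅b, a⁆ ^ k := by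
    have hab : Commute (⁅b, a⁆ ^ k) (a * b ^ k) := (ha.mul_right (hb.pow_right k)).pow_left k
    rw [← hab.eq, ← commutatorElement_pow_left hb]
    simp [commutatorElement_def, mul_assoc]
  induction n with
  | zero => simp
  | succ n ih =>
    have hc : Commute (⁅b, a⁆ ^ n.choose 2) (a * b) := (ha.mul_right hb).pow_left _
    calc (a * b) ^ (n + 1) = a ^ n * b ^ n * (⁅b, a⁆ ^ n.choose 2 * (a * b)) := by
          rw [pow_succ, ih, mul_assoc]
      _ = a ^ n * (b ^ n * a) * b * ⁅b, a⁆ ^ n.choose 2 := by rw [hc.eq]; simp only [mul_assoc]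
      _ = a ^ n * a * b ^ n * (⁅b, a⁆ ^ n * b) * ⁅b, a⁆ ^ n.choose 2 := by
          rw [hswap]; simp only [mul_assoc]
      _ = a ^ (n + 1) * b ^ (n + 1) * ⁅b, a⁆ ^ (n + 1).choose 2 := by
          rw [(hb.pow_left n).eq, Nat.choose_succ_succ' n 1, Nat.choose_one_right, pow_add ⁅b, a⁆,
            pow_succ, pow_succ]
          simp only [mul_assoc]

theorem dvd_choose_two_of_odd {n : ℕ} (hn : Odd n) : n ∣ n.choose 2 := by
  obtain ⟨m, rfl⟩ := hn
  rw [Nat.choose_two_right, Nat.add_sub_cancel, mul_left_comm, Nat.mul_div_cancel_left _ two_pos]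
  exact dvd_mul_right _ m

theorem mul_pow_of_odd {n : ℕ} (hn : Odd n) {a b : G} (ha : Commute ⁅b, a⁆ a)
    (hb : Commute ⁅b, a⁆ b) (hpow : ⁅b, a⁆ ^ n = 1) : (a * b) ^ n = a ^ n * b ^ n := by
  obtain ⟨m, hm⟩ := dvd_choose_two_of_odd hn
  rw [mul_pow_of_commute_commutator ha hb, hm, pow_mul, hpow, one_pow, mul_one]

/-- The power formula is applied to `x⁻¹` and `⁅x, u⁆`, whose product is the conjugate
`u * x⁻¹ * u⁻¹`. -/
theorem commutator_pow_eq_one {n : ℕ} (hn : Odd n) {x u : G} (hpow : ⁅x, u⁆ ^ n = 1)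
    (hx : Commute ⁅⁅x, u⁆, x⁆ x) (hc : Commute ⁅⁅x, u⁆, x⁆ ⁅x, u⁆) : ⁅x ^ n, u⁆ = 1 := by
  have hinv : ⁅⁅x, u⁆, x⁻¹⁆ = ⁅⁅x, u⁆, x⁆⁻¹ := by
    rw [commutatorElement_inv_right, ← commutatorElement_inv, mul_assoc, hx.inv_left.eq,
      inv_mul_cancel_left]
  have hprod : (x⁻¹ * ⁅x, u⁆) ^ n = x⁻¹ ^ n * ⁅x, u⁆ ^ n := by
    apply mul_pow_of_odd hn
    · rw [hinv]
      exact hx.inv_left.inv_right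
    · rw [hinv]
      exact hc.inv_left
    · rw [hinv, inv_pow, ← commutatorElement_pow_left hc, hpow, commutatorElement_one_left, inv_one]
  have hconj : x⁻¹ * ⁅x, u⁆ = u * x⁻¹ * u⁻¹ := by simp [commutatorElement_def, mul_assoc]
  have hfactor : ⁅x ^ n, u⁆ = x ^ n * (x⁻¹ * ⁅x, u⁆) ^ n := by
    rw [hconj, conj_pow, inv_pow]
    simp [commutatorElement_def, mul_assoc]
  rw [hfactor, hprod, hpow, mul_one, inv_pow, mul_inv_cancel]

variable (M : Subgroup G) [M.Normal]

theorem commute_mk_iff (a b : G) : Commute (a : G ⧸ M) (b : G ⧸ M) ↔ ⁅a, b⁆ ∈ M := by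
  rw [← commutatorElement_eq_one_iff_commute, ← QuotientGroup.eq_one_iff]
  rfl

theorem mk_mul_pow_of_odd {n : ℕ} (hn : Odd n) {a b : G} (ha : ⁅⁅b, a⁆, a⁆ ∈ M)
    (hb : ⁅⁅b, a⁆, b⁆ ∈ M) (hpow : ⁅b, a⁆ ^ n ∈ M) : ((a * b : G) : G ⧸ M) ^ n = a ^ n * b ^ n := by
  rw [← commute_mk_iff] at ha hb
  rw [← QuotientGroup.eq_one_iff] at hpow
  exact mul_pow_of_odd (a := (a : G ⧸ M)) (b := (b : G ⧸ M)) hn ha hb hpow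

theorem commutator_pow_mem {n : ℕ} (hn : Odd n) {x u : G} (hpow : ⁅x, u⁆ ^ n ∈ M)
    (hx : ⁅⁅⁅x, u⁆, x⁆, x⁆ ∈ M) (hc : ⁅⁅⁅x, u⁆, x⁆, ⁅x, u⁆⁆ ∈ M) : ⁅x ^ n, u⁆ ∈ M := by
  rw [← QuotientGroup.eq_one_iff] at hpow ⊢
  rw [← commute_mk_iff] at hx hc
  exact commutator_pow_eq_one (x := (x : G ⧸ M)) (u := (u : G ⧸ M)) hn hpow hx hc

end ClassTwo

section SubgroupPow

variable {G : Type*} [Group G]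

theorem pow_mem_subgroupPow {H : Subgroup G} {x : G} (hx : x ∈ H) (n : ℕ) :
    x ^ n ∈ subgroupPow H n :=
  subset_closure ⟨x, hx, rfl⟩

theorem subgroupPow_le_iff {H K : Subgroup G} {n : ℕ} :
    subgroupPow H n ≤ K ↔ ∀ x ∈ H, x ^ n ∈ K := by
  rw [subgroupPow, closure_le]
  exact ⟨fun h x hx => h ⟨x, hx, rfl⟩, fun h _ ⟨x, hx, hxy⟩ => hxy ▸ h x hx⟩

theorem subgroupPow_le (H : Subgroup G) (n : ℕ) : subgroupPow H n ≤ H :=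
  subgroupPow_le_iff.mpr fun _ hx => pow_mem hx n

theorem subgroupPow_mono {H K : Subgroup G} (h : H ≤ K) (n : ℕ) :
    subgroupPow H n ≤ subgroupPow K n :=
  subgroupPow_le_iff.mpr fun _ hx => pow_mem_subgroupPow (h hx) n

theorem map_subgroupPow {G' : Type*} [Group G'] (f : G →* G') (H : Subgroup G) (n : ℕ) :
    (subgroupPow H n).map f = subgroupPow (H.map f) n := by
  refine le_antisymm (map_le_iff_le_comap.mpr (subgroupPow_le_iff.mpr fun x hx => ?_))
    (subgroupPow_le_iff.mpr ?_)
  · simpa using pow_mem_subgroupPow (mem_map_of_mem f hx) n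
  · rintro _ ⟨x, hx, rfl⟩
    exact ⟨x ^ n, pow_mem_subgroupPow hx n, map_pow f x n⟩

instance subgroupPow_normal (N : Subgroup G) [hN : N.Normal] (n : ℕ) : (subgroupPow N n).Normal :=
  normal_iff_map_conj_eq.mpr fun g => by
    rw [map_subgroupPow, normal_iff_map_conj_eq.mp hN g]

/-- The `n`-th power map is a homomorphism from `N` to `G ⧸ M`, so its range is a subgroup. -/
theorem exists_mk_pow_eq {N M : Subgroup G} [M.Normal] {n : ℕ}
    (hmul : ∀ a ∈ N, ∀ b ∈ N, ((a * b : G) : G ⧸ M) ^ n = a ^ n * b ^ n) :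
    ∀ a ∈ subgroupPow N n, ∃ z ∈ N, (z : G ⧸ M) ^ n = a := by
  let powHom : N →* G ⧸ M :=
    MonoidHom.mk' (fun x => ((x : G) : G ⧸ M) ^ n) fun a b => hmul a a.2 b b.2
  have hle : subgroupPow N n ≤ powHom.range.comap (QuotientGroup.mk' M) :=
    subgroupPow_le_iff.mpr fun x hx => ⟨⟨x, hx⟩, rfl⟩
  intro a ha
  obtain ⟨z, hz⟩ := hle ha
  exact ⟨z, z.2, hz⟩

theorem index_eq_of_isCoatom [Finite G] {p : ℕ} [Fact p.Prime] (hG : IsPGroup p G)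
    {K : Subgroup G} (hK : IsCoatom K) : K.index = p := by
  obtain ⟨m, hm⟩ := IsPGroup.iff_card.mp (hG.to_subgroup K)
  obtain ⟨r, hr⟩ := hG.index K
  have hr0 : r ≠ 0 := by
    rintro rfl
    exact hK.1 (index_eq_one.mp hr)
  have hdvd : p ^ (m + 1) ∣ Nat.card G := by
    rw [← K.card_mul_index, hm, hr, ← pow_add]
    exact pow_dvd_pow p (by omega)
  obtain ⟨L, hL, hKL⟩ := Sylow.exists_subgroup_card_pow_succ hdvd hm
  have hpos : 0 < p ^ m := pow_pos (Fact.out : p.Prime).pos m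
  have hne : K ≠ L := by
    rintro rfl
    exact (Nat.pow_lt_pow_right (Fact.out : p.Prime).one_lt m.lt_succ_self).ne (hm.symm.trans hL)
  have hcard := K.card_mul_index
  rw [← card_top (G := G), ← hK.2 L (hKL.lt_of_ne hne), hL, hm, pow_succ] at hcard
  exact Nat.eq_of_mul_eq_mul_left hpos hcard

theorem subgroupPow_top_le_frattini [Finite G] {p : ℕ} [Fact p.Prime] (hG : IsPGroup p G) :
    subgroupPow (⊤ : Subgroup G) p ≤ frattini G := by
  refine le_iInf₂ fun K hK => subgroupPow_le_iff.mpr fun x _ => ?_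
  have := hG.isNilpotent
  have : K.Normal := Group.normalizerCondition_of_isNilpotent.normal_of_coatom K hK
  rw [← index_eq_of_isCoatom hG hK]
  exact K.pow_index_mem x

theorem eq_bot_of_subgroupPow_eq_self [Finite G] {p : ℕ} [Fact p.Prime] (hG : IsPGroup p G)
    {N : Subgroup G} (hN : subgroupPow N p = N) : N = ⊥ := by
  have htop : subgroupPow (⊤ : Subgroup N) p = ⊤ := by
    apply map_injective N.subtype_injective
    rw [map_subgroupPow, ← MonoidHom.range_eq_map, N.range_subtype, hN]
  have hbot : (⊥ : Subgroup N) = ⊤ := frattini_nongenerating <| by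
    rw [bot_sup_eq, eq_top_iff, ← htop]
    exact subgroupPow_top_le_frattini (hG.to_subgroup N)
  rw [← N.range_subtype, MonoidHom.range_eq_map, ← hbot, Subgroup.map_bot]

end SubgroupPow

section PowerfullyEmbedded

variable {G : Type*} [Group G]

theorem commutator_top_le_iff {H N : Subgroup G} [N.Normal] :
    ⁅H, (⊤ : Subgroup G)⁆ ≤ N ↔ H ≤ N.upperCentralSeriesStep := by
  simp only [commutator_le, mem_top, forall_const]
  rfl

theorem le_of_le_sup_commutator [Group.IsNilpotent G] {P R : Subgroup G} [P.Normal]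
    (hR : R ≤ P ⊔ ⁅R, (⊤ : Subgroup G)⁆) : R ≤ P := by
  have hseries (n : ℕ) : R ≤ P ⊔ (⊤ : Subgroup G).lowerCentralSeries n := by
    induction n with
    | zero => simp
    | succ n ih =>
      refine hR.trans (sup_le le_sup_left (commutator_top_le_iff.mpr (ih.trans (sup_le ?_ ?_)))) <;>
        rw [← commutator_top_le_iff]
      · exact (commutator_le_left P ⊤).trans le_sup_left
      · exact le_sup_right
  obtain ⟨n, hn⟩ := Subgroup.nilpotent_iff_lowerCentralSeries.mp ‹_›
  simpa [hn] using hseries n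

/-- A subgroup `N` is powerfully embedded in `G` if `[N, G] ≤ N^p`. This is the notion for odd
`p`; for `p = 2` it would require `[N, G] ≤ N^4`. -/
def IsPowerfullyEmbedded (p : ℕ) (N : Subgroup G) : Prop :=
  ⁅N, (⊤ : Subgroup G)⁆ ≤ subgroupPow N p

namespace IsPowerfullyEmbedded

variable {p : ℕ} {N : Subgroup G}

theorem normal (hN : IsPowerfullyEmbedded p N) : N.Normal :=
  commutator_top_right_le_iff.mp (hN.trans (subgroupPow_le N p))

theorem commutator_mem (hN : IsPowerfullyEmbedded p N) {x : G} (hx : x ∈ N) (g : G) :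
    ⁅x, g⁆ ∈ subgroupPow N p :=
  hN (commutator_mem_commutator hx (mem_top g))

variable [Group.IsNilpotent G]

/-- By nilpotency it suffices to work modulo `[[N^p, G], G]`, where the class-two power formulas
apply. -/
theorem pow (hN : IsPowerfullyEmbedded p N) (hp : Odd p) :
    IsPowerfullyEmbedded p (subgroupPow N p) := by
  have := hN.normal
  refine le_of_le_sup_commutator <|
    commutator_top_le_iff.mpr <| subgroupPow_le_iff.mpr fun x hx g => ?_
  have hc := hN.commutator_mem hx g
  have hd := commutator_mem_commutator hc (mem_top x)
  exact commutator_pow_mem _ hp (mem_sup_left (pow_mem_subgroupPow hc p))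
    (mem_sup_right (commutator_mem_commutator hd (mem_top _)))
    (mem_sup_right (commutator_mem_commutator hd (mem_top _)))

theorem mk_mul_pow (hN : IsPowerfullyEmbedded p N) (hp : Odd p) {M : Subgroup G} [M.Normal]
    (hM : subgroupPow (subgroupPow N p) p ≤ M) (x : G) {b : G} (hb : b ∈ N) :
    ((x * b : G) : G ⧸ M) ^ p = x ^ p * b ^ p := by
  have hc := hN.commutator_mem hb x
  exact mk_mul_pow_of_odd _ hp (hM ((hN.pow hp).commutator_mem hc x))
    (hM ((hN.pow hp).commutator_mem hc b)) (hM (pow_mem_subgroupPow hc p))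

end IsPowerfullyEmbedded

/-- The series `N ≥ N^p ≥ (N^p)^p ≥ ⋯` of iterated power subgroups. -/
def powSeries (p : ℕ) (N : Subgroup G) : ℕ → Subgroup G
  | 0 => N
  | k + 1 => subgroupPow (powSeries p N k) p

theorem powSeries_antitone (p : ℕ) (N : Subgroup G) : Antitone (powSeries p N) :=
  antitone_nat_of_succ_le fun _ => subgroupPow_le _ p

theorem exists_powSeries_eq_bot [Finite G] {p : ℕ} [Fact p.Prime] (hG : IsPGroup p G)
    (N : Subgroup G) : ∃ m, powSeries p N m = ⊥ := by
  obtain ⟨m, hm⟩ := WellFoundedLT.antitone_chain_condition (powSeries_antitone p N)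
  exact ⟨m, eq_bot_of_subgroupPow_eq_self hG (hm (m + 1) m.le_succ).symm⟩

namespace IsPowerfullyEmbedded

variable {p : ℕ} {N : Subgroup G}

theorem iterated_pow [Group.IsNilpotent G] (hN : IsPowerfullyEmbedded p N) (hp : Odd p) (k : ℕ) :
    IsPowerfullyEmbedded p (powSeries p N k) := by
  induction k with
  | zero => exact hN
  | succ k ih => exact ih.pow hp

/-- Modulo `powSeries p N (j + 2)` the `p`-th power map is multiplicative on `powSeries p N j`, so
an approximate `p`-th root can be improved step by step until the error vanishes. -/
theorem exists_pow_eq [Finite G] [Fact p.Prime] (hG : IsPGroup p G) (hN : IsPowerfullyEmbedded p N)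
    (hp : Odd p) {a : G} (ha : a ∈ subgroupPow N p) : ∃ x ∈ N, x ^ p = a := by
  have := hG.isNilpotent
  have happrox (j : ℕ) : ∃ x ∈ N, (x ^ p)⁻¹ * a ∈ powSeries p N (j + 1) := by
    induction j with
    | zero => exact ⟨1, one_mem N, by rw [one_pow, inv_one, one_mul]; exact ha⟩
    | succ j ih =>
      obtain ⟨x, hx, hxa⟩ := ih
      have : (powSeries p N (j + 2)).Normal := (hN.iterated_pow hp (j + 2)).normal
      have hmul (x b : G) (hb : b ∈ powSeries p N j) :
          ((x * b : G) : G ⧸ powSeries p N (j + 2)) ^ p = x ^ p * b ^ p :=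
        (hN.iterated_pow hp j).mk_mul_pow (M := powSeries p N (j + 2)) hp le_rfl x hb
      obtain ⟨z, hz, hza⟩ := exists_mk_pow_eq (fun x _ b hb => hmul x b hb) _ hxa
      refine ⟨x * z, mul_mem hx (powSeries_antitone p N j.zero_le hz), QuotientGroup.eq.mp ?_⟩
      rw [QuotientGroup.mk_pow, hmul x z hz, hza]
      simp
  obtain ⟨m, hm⟩ := exists_powSeries_eq_bot hG N
  obtain ⟨x, hx, hxa⟩ := happrox m
  have hbot := powSeries_antitone p N m.le_succ hxa
  rw [hm, mem_bot] at hbot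
  exact ⟨x, hx, inv_mul_eq_one.mp hbot⟩

end IsPowerfullyEmbedded

end PowerfullyEmbedded

section PowerCentralSeries

/-- A descending central series of `G` ending in `1` whose terms are related by the `p`-th power
map: `F (k + 1)` consists of the `p`-th powers of the elements of `F k`. In a powerful `p`-group,
for odd `p`, this is the series of iterated power subgroups. -/
structure IsPowerCentralSeries (p : ℕ) {G : Type*} [Group G] (F : ℕ → Subgroup G) : Prop where
  zero : F 0 = ⊤
  commutator_le (k : ℕ) : ⁅F k, (⊤ : Subgroup G)⁆ ≤ F (k + 1)
  coe_succ (k : ℕ) : (F (k + 1) : Set G) = (· ^ p) '' F k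
  exists_eq_bot : ∃ m, F m = ⊥

theorem IsPowerful.isPowerCentralSeries {p : ℕ} [Fact p.Prime] (hp2 : p ≠ 2) {G : Type*} [Group G]
    [Finite G] (hG : IsPGroup p G) (hpow : IsPowerful p G) :
    IsPowerCentralSeries p (powSeries p (⊤ : Subgroup G)) := by
  have := hG.isNilpotent
  have hp := (Fact.out : p.Prime).odd_of_ne_two hp2
  have htop : IsPowerfullyEmbedded p (⊤ : Subgroup G) := by
    rwa [IsPowerful, if_neg hp2, _root_.commutator_def] at hpow
  exact
    { zero := rfl
      commutator_le := htop.iterated_pow hp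
      coe_succ := fun k => Set.Subset.antisymm
        (fun _ ha => (htop.iterated_pow hp k).exists_pow_eq hG hp ha)
        (Set.image_subset_iff.mpr fun _ hx => pow_mem_subgroupPow hx p)
      exists_eq_bot := exists_powSeries_eq_bot hG ⊤ }

namespace IsPowerCentralSeries

variable {p : ℕ} {G : Type*} [Group G] {F : ℕ → Subgroup G}

theorem antitone (hF : IsPowerCentralSeries p F) : Antitone F := by
  refine antitone_nat_of_succ_le fun k a ha => ?_
  rw [← SetLike.mem_coe, hF.coe_succ] at ha
  obtain ⟨x, hx, rfl⟩ := ha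
  exact (F k).pow_mem hx p

theorem pow_mem (hF : IsPowerCentralSeries p F) {k : ℕ} {x : G} (hx : x ∈ F k) :
    x ^ p ∈ F (k + 1) := by
  rw [← SetLike.mem_coe, hF.coe_succ]
  exact ⟨x, hx, rfl⟩

theorem exists_pow_eq (hF : IsPowerCentralSeries p F) {k : ℕ} {a : G} (ha : a ∈ F (k + 1)) :
    ∃ x ∈ F k, x ^ p = a := by
  rwa [← SetLike.mem_coe, hF.coe_succ] at ha

theorem normal (hF : IsPowerCentralSeries p F) (k : ℕ) : (F k).Normal :=
  commutator_top_right_le_iff.mp ((hF.commutator_le k).trans (hF.antitone k.le_succ))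

theorem commutator_mem (hF : IsPowerCentralSeries p F) {k : ℕ} {a : G} (ha : a ∈ F k) (g : G) :
    ⁅a, g⁆ ∈ F (k + 1) :=
  hF.commutator_le k (commutator_mem_commutator ha (mem_top g))

theorem commutator_mem' (hF : IsPowerCentralSeries p F) {k : ℕ} {a : G} (ha : a ∈ F k) (g : G) :
    ⁅g, a⁆ ∈ F (k + 1) := by
  rw [← commutatorElement_inv]
  exact inv_mem (hF.commutator_mem ha g)

theorem mem_zero (hF : IsPowerCentralSeries p F) (x : G) : x ∈ F 0 :=
  hF.zero ▸ mem_top x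

theorem commutator_mem_one (hF : IsPowerCentralSeries p F) (a b : G) : ⁅a, b⁆ ∈ F 1 :=
  hF.commutator_mem (hF.mem_zero a) b

theorem pow_pow_mem (hF : IsPowerCentralSeries p F) (x : G) (k : ℕ) : x ^ p ^ k ∈ F k := by
  induction k with
  | zero => exact hF.mem_zero _
  | succ k ih =>
    rw [pow_succ, pow_mul]
    exact hF.pow_mem ih

theorem exists_pow_pow_eq_one (hF : IsPowerCentralSeries p F) : ∃ m, ∀ x : G, x ^ p ^ m = 1 := by
  obtain ⟨m, hm⟩ := hF.exists_eq_bot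
  exact ⟨m, fun x => mem_bot.mp (hm ▸ hF.pow_pow_mem x m)⟩

theorem commutator_mem_add (hF : IsPowerCentralSeries p F) (hp : Odd p) {j k : ℕ} {a b : G}
    (ha : a ∈ F j) (hb : b ∈ F k) : ⁅a, b⁆ ∈ F (j + k + 1) := by
  induction k generalizing b with
  | zero => exact hF.commutator_mem ha b
  | succ k ih =>
    obtain ⟨y, hy, rfl⟩ := hF.exists_pow_eq hb
    have := hF.normal (j + k + 2)
    have hc : ⁅y, a⁆ ∈ F (j + k + 1) := by
      rw [← commutatorElement_inv]
      exact inv_mem (ih hy)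
    have hd (g : G) : ⁅⁅⁅y, a⁆, y⁆, g⁆ ∈ F (j + k + 2) :=
      hF.antitone (Nat.le_succ _) (hF.commutator_mem (hF.commutator_mem hc y) g)
    rw [← commutatorElement_inv]
    exact inv_mem (commutator_pow_mem _ hp (hF.pow_mem hc) (hd _) (hd _))

end IsPowerCentralSeries

end PowerCentralSeries

section OmegaClosed

variable {p : ℕ} {G : Type*} [Group G]

theorem pow_pow_eq_one_of_le {m n : ℕ} {x : G} (hx : x ^ p ^ m = 1) (h : m ≤ n) : x ^ p ^ n = 1 :=
  orderOf_dvd_iff_pow_eq_one.mp ((orderOf_dvd_of_pow_eq_one hx).trans (pow_dvd_pow p h))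

/-- `H` is omega-closed if, for each `n`, its elements of order dividing `p ^ n` are closed under
multiplication, so that they make up `Ω_n(H)`. -/
def IsOmegaClosed (p : ℕ) (H : Subgroup G) : Prop :=
  ∀ n, ∀ x ∈ H, ∀ y ∈ H, x ^ p ^ n = 1 → y ^ p ^ n = 1 → (x * y) ^ p ^ n = 1

theorem IsOmegaClosed.mono {H K : Subgroup G} (hK : IsOmegaClosed p K) (h : H ≤ K) :
    IsOmegaClosed p H :=
  fun n x hx y hy => hK n x (h hx) y (h hy)

theorem IsOmegaClosed.map {G' : Type*} [Group G'] {H : Subgroup G} (hH : IsOmegaClosed p H)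
    {f : G →* G'} (hf : Function.Injective f) : IsOmegaClosed p (H.map f) := by
  rintro n _ ⟨x, hx, rfl⟩ _ ⟨y, hy, rfl⟩
  simp only [← map_mul, ← map_pow, map_eq_one_iff f hf]
  exact hH n x hx y hy

theorem IsOmegaClosed.mem_omegaSubgroup {H : Subgroup G} (hH : IsOmegaClosed p H) {n : ℕ} {x : G} :
    x ∈ omegaSubgroup p n H ↔ x ∈ H ∧ x ^ p ^ n = 1 := by
  refine ⟨fun hx => ?_, fun hx => subset_closure hx⟩
  induction hx using closure_induction with
  | mem _ hx => exact hx
  | one => exact ⟨one_mem _, one_pow _⟩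
  | mul x y _ _ hx hy => exact ⟨mul_mem hx.1 hy.1, hH n x hx.1 y hy.1 hx.2 hy.2⟩
  | inv x _ hx => exact ⟨inv_mem hx.1, by rw [inv_pow, hx.2, inv_one]⟩

instance omegaSubgroup_normal (n : ℕ) (H : Subgroup G) [hH : H.Normal] :
    (omegaSubgroup p n H).Normal := by
  refine normalizer_eq_top_iff.mp (top_le_iff.mp (le_normalizer_closure_iff.mpr ?_))
  rintro g - x ⟨hx, hxn⟩
  exact subset_closure ⟨hH.conj_mem x hx g, by rw [conj_pow, hxn, mul_one, mul_inv_cancel]⟩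

end OmegaClosed

section CommutatorOrder

variable {p : ℕ} {G : Type*} [Group G] {F : ℕ → Subgroup G}

/-- `[t, u]` has order dividing `p ^ n` whenever `t ∈ F k` has order dividing `p ^ (n + e + 1)` and
`u ∈ F e` has order dividing `p ^ (n + k)`. -/
def CommutatorOrderBound (p : ℕ) (F : ℕ → Subgroup G) (e k n : ℕ) : Prop :=
  ∀ t ∈ F k, ∀ u ∈ F e, t ^ p ^ (n + e + 1) = 1 → u ^ p ^ (n + k) = 1 → ⁅t, u⁆ ^ p ^ n = 1

namespace IsPowerCentralSeries

/-- As `[u, g] = u * (g * u * g⁻¹)⁻¹` is a product of two elements of `⟨u⟩ F 1`,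
its order is controlled by that of `u` alone. -/
theorem commutator_pow_eq_one_left (hF : IsPowerCentralSeries p F) {u : G}
    (hu : IsOmegaClosed p (zpowers u ⊔ F 1)) {n : ℕ} (hun : u ^ p ^ n = 1) (g : G) :
    ⁅u, g⁆ ^ p ^ n = 1 := by
  have hself : u ∈ zpowers u ⊔ F 1 := mem_sup_left (mem_zpowers u)
  have hconj : g * u * g⁻¹ = ⁅g, u⁆ * u := by simp [commutatorElement_def]
  have hmem : g * u * g⁻¹ ∈ zpowers u ⊔ F 1 :=
    hconj ▸ mul_mem (mem_sup_right (hF.commutator_mem_one g u)) hself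
  have hcomm : ⁅u, g⁆ = u * (g * u * g⁻¹)⁻¹ := by simp [commutatorElement_def, mul_assoc]
  rw [hcomm]
  refine hu n u hself _ (inv_mem hmem) hun ?_
  rw [inv_pow, conj_pow, hun, mul_one, mul_inv_cancel, inv_one]

theorem commutator_pow_eq_one_right (hF : IsPowerCentralSeries p F) {u : G}
    (hu : IsOmegaClosed p (zpowers u ⊔ F 1)) {n : ℕ} (hun : u ^ p ^ n = 1) (g : G) :
    ⁅g, u⁆ ^ p ^ n = 1 := by
  rw [← commutatorElement_inv, inv_pow, hF.commutator_pow_eq_one_left hu hun, inv_one]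

theorem pow_commutator_pow_eq_one (hF : IsPowerCentralSeries p F) (hp : Odd p)
    (hΩ : IsOmegaClosed p (F 1)) {n : ℕ} {x u : G} (hc : ⁅x, u⁆ ^ p ^ (n + 1) = 1)
    (hdx : ⁅⁅⁅x, u⁆, x⁆, x⁆ ^ p ^ n = 1) (hdc : ⁅⁅⁅x, u⁆, x⁆, ⁅x, u⁆⁆ ^ p ^ n = 1) :
    ⁅x ^ p, u⁆ ^ p ^ n = 1 := by
  have := hF.normal 1
  rw [pow_succ', pow_mul] at hc
  exact (hΩ.mem_omegaSubgroup.mp (commutator_pow_mem (omegaSubgroup p n (F 1)) hp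
    (hΩ.mem_omegaSubgroup.mpr ⟨(F 1).pow_mem (hF.commutator_mem_one x u) p, hc⟩)
    (hΩ.mem_omegaSubgroup.mpr ⟨hF.commutator_mem_one _ _, hdx⟩)
    (hΩ.mem_omegaSubgroup.mpr ⟨hF.commutator_mem_one _ _, hdc⟩))).2

theorem commutatorOrderBound_zero (hF : IsPowerCentralSeries p F)
    (hΩ : ∀ u, IsOmegaClosed p (zpowers u ⊔ F 1)) (e n : ℕ) : CommutatorOrderBound p F e 0 n :=
  fun t _ u _ _ hun => hF.commutator_pow_eq_one_right (hΩ u) hun t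

theorem commutatorOrderBound_succ (hF : IsPowerCentralSeries p F) (hp : Odd p)
    (hΩ : ∀ u, IsOmegaClosed p (zpowers u ⊔ F 1)) {e k n : ℕ}
    (htwo : CommutatorOrderBound p F 0 (e + 2) n) (hk : CommutatorOrderBound p F e k (n + 1)) :
    CommutatorOrderBound p F e (k + 1) n := by
  intro t ht u hu htn hun
  obtain ⟨x, hx, rfl⟩ := hF.exists_pow_eq ht
  have hxn : x ^ p ^ (n + (e + 2)) = 1 := by
    rw [← htn, ← pow_mul, ← pow_succ']
    rfl
  have hc : ⁅x, u⁆ ^ p ^ (n + 1) = 1 :=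
    hk x hx u hu (by rwa [Nat.add_right_comm n]) (by rwa [Nat.add_assoc, Nat.add_comm 1])
  have hd : ⁅⁅x, u⁆, x⁆ ∈ F (e + 2) :=
    hF.commutator_mem (hF.commutator_mem' hu x) x
  have hdv (v : G) (hv : v ^ p ^ (n + (e + 2)) = 1) : ⁅⁅⁅x, u⁆, x⁆, v⁆ ^ p ^ n = 1 :=
    htwo _ hd v (hF.mem_zero v) (hF.commutator_pow_eq_one_left (hΩ _) hc x) hv
  exact hF.pow_commutator_pow_eq_one hp ((hΩ 1).mono le_sup_right) hc (hdv x hxn)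
    (hdv _ (pow_pow_eq_one_of_le hc (by omega)))

/-- As in `commutatorOrderBound_succ`, the bound at `t = x ^ p` follows from the bound at
`[[x, u], x]`, which lies deeper in the series. -/
theorem commutatorOrderBound_two_of_one (hF : IsPowerCentralSeries p F) (hp : Odd p)
    (hΩ : ∀ u, IsOmegaClosed p (zpowers u ⊔ F 1)) {n : ℕ}
    (hone : CommutatorOrderBound p F 0 1 (n + 1)) : CommutatorOrderBound p F 0 2 n := by
  obtain ⟨m, hm⟩ := hF.exists_eq_bot
  have hdeep (k : ℕ) (hk : k ≤ m) : ∀ t ∈ F (k + 2), ∀ u : G,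
      t ^ p ^ (n + 1) = 1 → u ^ p ^ (n + 2) = 1 → ⁅t, u⁆ ^ p ^ n = 1 := by
    induction hk using Nat.decreasingInduction with
    | self =>
      intro t ht u _ _
      have hbot := hF.antitone (Nat.le_add_right m 2) ht
      rw [hm, mem_bot] at hbot
      rw [hbot, commutatorElement_one_left, one_pow]
    | of_succ k _ ih =>
      intro t ht u htn hun
      obtain ⟨x, hx, rfl⟩ := hF.exists_pow_eq ht
      rw [← pow_mul, ← pow_succ'] at htn
      have hc : ⁅x, u⁆ ^ p ^ (n + 1) = 1 :=
        hone x (hF.antitone (Nat.le_add_left 1 k) hx) u (hF.mem_zero u) htn hun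
      have hd : ⁅⁅x, u⁆, x⁆ ∈ F (k + 1 + 2) := hF.commutator_mem (hF.commutator_mem hx u) x
      have hdv (v : G) (hv : v ^ p ^ (n + 2) = 1) : ⁅⁅⁅x, u⁆, x⁆, v⁆ ^ p ^ n = 1 :=
        ih _ hd v (hF.commutator_pow_eq_one_left (hΩ _) hc x) hv
      exact hF.pow_commutator_pow_eq_one hp ((hΩ 1).mono le_sup_right) hc (hdv x htn)
        (hdv _ (pow_pow_eq_one_of_le hc (by omega)))
  exact fun t ht u _ => hdeep 0 m.zero_le t ht u

theorem commutatorOrderBound_two (hF : IsPowerCentralSeries p F) (hp : Odd p)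
    (hΩ : ∀ u, IsOmegaClosed p (zpowers u ⊔ F 1)) (n : ℕ) : CommutatorOrderBound p F 0 2 n := by
  obtain ⟨m, hm⟩ := hF.exists_pow_pow_eq_one
  obtain hn | hn := le_total m n
  · exact fun t _ u _ _ _ => pow_pow_eq_one_of_le (hm _) hn
  · induction hn using Nat.decreasingInduction with
    | self => exact fun t _ u _ _ _ => hm _
    | of_succ n _ ih =>
      exact hF.commutatorOrderBound_two_of_one hp hΩ
        (hF.commutatorOrderBound_succ hp hΩ ih (hF.commutatorOrderBound_zero hΩ 0 _))

theorem commutatorOrderBound (hF : IsPowerCentralSeries p F) (hp : Odd p)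
    (hΩ : ∀ u, IsOmegaClosed p (zpowers u ⊔ F 1)) (e k n : ℕ) : CommutatorOrderBound p F e k n := by
  have hzero (k n : ℕ) : CommutatorOrderBound p F 0 k n := by
    induction k generalizing n with
    | zero => exact hF.commutatorOrderBound_zero hΩ 0 n
    | succ k ih =>
      exact hF.commutatorOrderBound_succ hp hΩ (hF.commutatorOrderBound_two hp hΩ n) (ih (n + 1))
  induction k generalizing n with
  | zero => exact hF.commutatorOrderBound_zero hΩ e n
  | succ k ih => exact hF.commutatorOrderBound_succ hp hΩ (hzero (e + 2) n) (ih (n + 1))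

/-- Modulo `Ω_n(F 1)` the `p`-th power map is multiplicative on elements of order dividing
`p ^ (n + 1)`, which gives an induction on `n`. -/
theorem isOmegaClosed_top (hF : IsPowerCentralSeries p F) (hp : Odd p)
    (hΩ : ∀ u, IsOmegaClosed p (zpowers u ⊔ F 1)) : IsOmegaClosed p (⊤ : Subgroup G) := by
  intro n
  induction n with
  | zero =>
    intro x _ y _ hx hy
    rw [pow_zero, pow_one] at *
    rw [hx, hy, one_mul]
  | succ n ih =>
    intro x _ y _ hx hy
    have := hF.normal 1
    have hΩ1 : IsOmegaClosed p (F 1) := (hΩ 1).mono le_sup_right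
    have hc : ⁅y, x⁆ ^ p ^ (n + 1) = 1 := hF.commutator_pow_eq_one_left (hΩ y) hy x
    have hd (z : G) (hz : z ^ p ^ (n + 1) = 1) : ⁅⁅y, x⁆, z⁆ ∈ omegaSubgroup p n (F 1) :=
      hΩ1.mem_omegaSubgroup.mpr ⟨hF.commutator_mem_one _ _, hF.commutatorOrderBound hp hΩ 0 1 n _
        (hF.commutator_mem_one y x) z (hF.mem_zero z) hc hz⟩
    rw [pow_succ', pow_mul] at hc
    have hmul := mk_mul_pow_of_odd (omegaSubgroup p n (F 1)) hp (hd x hx) (hd y hy)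
      (hΩ1.mem_omegaSubgroup.mpr ⟨(F 1).pow_mem (hF.commutator_mem_one y x) p, hc⟩)
    have herror := (hΩ1.mem_omegaSubgroup.mp (QuotientGroup.eq.mp hmul.symm)).2
    rw [pow_succ', pow_mul] at hx hy ⊢
    have hprod := ih _ (mem_top _) _ (mem_top _) (ih _ (mem_top _) _ (mem_top _) hx hy) herror
    rwa [mul_inv_cancel_left] at hprod

end IsPowerCentralSeries

end CommutatorOrder

section Powerful

variable {p : ℕ}

theorem IsPowerCentralSeries.isPowerful_zpowers_sup (hp2 : p ≠ 2) {G : Type*} [Group G]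
    {F : ℕ → Subgroup G} (hF : IsPowerCentralSeries p F) (u : G) :
    IsPowerful p ↥(zpowers u ⊔ F 1) := by
  have := hF.normal 1
  have := hF.normal 2
  have hcentral {x : G} (hx : x ∈ F 1) (g : G) : Commute (x : G ⧸ F 2) (g : G ⧸ F 2) :=
    (commute_mk_iff _ _ _).mpr (hF.commutator_mem hx g)
  rw [IsPowerful, if_neg hp2, _root_.commutator_def, Subgroup.commutator_le]
  rintro ⟨a, ha⟩ - ⟨b, hb⟩ -
  have hab : ⁅a, b⁆ ∈ F 2 := by
    obtain ⟨_, ⟨i, rfl⟩, x, hx, rfl⟩ := mem_sup_of_normal_right.mp ha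
    obtain ⟨_, ⟨j, rfl⟩, y, hy, rfl⟩ := mem_sup_of_normal_right.mp hb
    rw [← commute_mk_iff]
    exact ((Commute.zpow_zpow_self (u : G ⧸ F 2) i j).mul_right
      (hcentral hy (u ^ i)).symm).mul_left (hcentral hx _)
  obtain ⟨c, hc, hcab⟩ := hF.exists_pow_eq hab
  have hpow : (⟨c, mem_sup_right hc⟩ : ↥(zpowers u ⊔ F 1)) ^ p =
      ⁅(⟨a, ha⟩ : ↥(zpowers u ⊔ F 1)), ⟨b, hb⟩⁆ := Subtype.ext hcab
  exact hpow ▸ pow_mem_subgroupPow (mem_top _) p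

theorem isOmegaClosed_zpowers {G : Type*} [Group G] (u : G) : IsOmegaClosed p (zpowers u) := by
  rintro n _ ⟨i, rfl⟩ _ ⟨j, rfl⟩ hi hj
  rw [(Commute.zpow_zpow_self u i j).mul_pow, hi, hj, one_mul]

/-- By induction the proper subgroups `⟨u⟩ G^p` are omega-closed; if `⟨u⟩ G^p = G` then `G = ⟨u⟩`,
as `G^p` lies in the Frattini subgroup. -/
theorem IsPowerful.isOmegaClosed [Fact p.Prime] (hp2 : p ≠ 2) {G : Type*} [Group G] [Finite G]
    (hG : IsPGroup p G) (hpow : IsPowerful p G) : IsOmegaClosed p (⊤ : Subgroup G) := by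
  induction hcard : Nat.card G using Nat.strong_induction_on generalizing G with
  | _ N ih =>
    have hF := hpow.isPowerCentralSeries hp2 hG
    refine hF.isOmegaClosed_top ((Fact.out : p.Prime).odd_of_ne_two hp2) fun u => ?_
    let H := zpowers u ⊔ powSeries p ⊤ 1
    change IsOmegaClosed p H
    obtain htop | htop := eq_or_ne H ⊤
    · have hu : zpowers u = ⊤ := frattini_nongenerating <|
        top_le_iff.mp (htop.ge.trans (sup_le_sup_left (subgroupPow_top_le_frattini hG) _))
      exact (isOmegaClosed_zpowers u).mono (hu ▸ le_top)
    · have hlt : Nat.card H < N :=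
        hcard ▸ H.card_le_card_group.lt_of_ne fun h => htop (eq_top_of_card_eq H h)
      have hclosed := ih _ hlt (hG.to_subgroup H) (hF.isPowerful_zpowers_sup hp2 u) rfl
      have hmap := hclosed.map H.subtype_injective
      rwa [← MonoidHom.range_eq_map, H.range_subtype] at hmap

end Powerful

section OmegaChain

variable {p : ℕ} {G : Type*} [Group G]

/-- The chain with terms `Ω_{k+1}(F (i + 1 - k)) ∩ Ω_i(F 1)`, for `k ≥ 1`, on `Ω_i(F 1)`. -/
def omegaChain (p : ℕ) (F : ℕ → Subgroup G) (i : ℕ) : ℕ → Subgroup (omegaSubgroup p i (F 1))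
  | 0 => ⊥
  | k + 1 => (omegaSubgroup p (k + 2) (F (i - k))).subgroupOf _

theorem omegaSubgroup_mono {H K : Subgroup G} (h : H ≤ K) {m n : ℕ} (hmn : m ≤ n) :
    omegaSubgroup p m H ≤ omegaSubgroup p n K :=
  closure_mono fun _ hx => ⟨h hx.1, pow_pow_eq_one_of_le hx.2 hmn⟩

namespace IsPowerCentralSeries

variable {F : ℕ → Subgroup G}

theorem exists_pow_eq_commutator (hF : IsPowerCentralSeries p F) (hp : Odd p)
    (hΩ : ∀ u, IsOmegaClosed p (zpowers u ⊔ F 1)) {j n : ℕ} {a b : G} (ha : a ∈ F j) (hb : b ∈ F 1)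
    (han : a ^ p ^ (n + 2) = 1) (hbn : b ^ p ^ (n + j) = 1) :
    ∃ c ∈ F (j + 1), c ^ p ^ (n + 1) = 1 ∧ c ^ p = ⁅a, b⁆ := by
  obtain ⟨c, hc, hcab⟩ := hF.exists_pow_eq (hF.commutator_mem_add hp ha hb)
  refine ⟨c, hc, ?_, hcab⟩
  rw [pow_succ', pow_mul, hcab]
  exact hF.commutatorOrderBound hp hΩ 1 j n a ha b hb han hbn

theorem omegaChain_commutator_le (hF : IsPowerCentralSeries p F) (hp : Odd p)
    (hΩ : IsOmegaClosed p (⊤ : Subgroup G)) {i k : ℕ} (hk : k < i) :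
    ⁅omegaChain p F i (k + 1), ⊤⁆ ≤ subgroupPow (omegaChain p F i k) p := by
  have hmem {n : ℕ} {H : Subgroup G} {x : G} : x ∈ omegaSubgroup p n H ↔ x ∈ H ∧ x ^ p ^ n = 1 :=
    (hΩ.mono le_top).mem_omegaSubgroup
  rw [Subgroup.commutator_le]
  rintro ⟨a, haK⟩ ha ⟨b, hbK⟩ -
  obtain ⟨haF, han⟩ := hmem.mp (mem_subgroupOf.mp ha)
  obtain ⟨hbF, hbn⟩ := hmem.mp hbK
  obtain ⟨c, hc, hcn, hcab⟩ := hF.exists_pow_eq_commutator hp (fun u => hΩ.mono le_top) haF hbF han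
    (by rwa [Nat.add_sub_cancel' hk.le])
  have hcK : c ∈ omegaSubgroup p i (F 1) :=
    hmem.mpr ⟨hF.antitone (Nat.le_add_left 1 _) hc, pow_pow_eq_one_of_le hcn hk⟩
  have hpow : (⟨c, hcK⟩ : omegaSubgroup p i (F 1)) ^ p =
      ⁅(⟨a, haK⟩ : omegaSubgroup p i (F 1)), ⟨b, hbK⟩⁆ := Subtype.ext hcab
  rw [← hpow]
  cases k with
  | zero =>
    have hone : (⟨c, hcK⟩ : omegaSubgroup p i (F 1)) ^ p = 1 := Subtype.ext (by simpa using hcn)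
    exact hone ▸ one_mem _
  | succ k =>
    refine pow_mem_subgroupPow (mem_subgroupOf.mpr (hmem.mpr ⟨?_, hcn⟩)) p
    exact hF.antitone (by omega) hc

theorem isPowerfullyCentralChain_omegaChain (hF : IsPowerCentralSeries p F) (hp : Odd p)
    (hΩ : IsOmegaClosed p (⊤ : Subgroup G)) {i : ℕ} (hi : 1 ≤ i) :
    IsPowerfullyCentralChain p i (omegaChain p F i) := by
  refine ⟨rfl, ?_, fun k _ => ?_, fun k hk => hF.omegaChain_commutator_le hp hΩ hk⟩
  · obtain ⟨i, rfl⟩ := Nat.exists_eq_add_of_le' hi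
    refine subgroupOf_eq_top.mpr (omegaSubgroup_mono (hF.antitone ?_) (Nat.le_succ _))
    omega
  · cases k with
    | zero => exact bot_le
    | succ k =>
      exact comap_mono (omegaSubgroup_mono (hF.antitone (by omega)) (Nat.le_succ _))

end IsPowerCentralSeries

theorem IsPowerfullyCentralChain.isPowerful (hp2 : p ≠ 2) {n : ℕ} (hn : 1 ≤ n)
    {H : ℕ → Subgroup G} (h : IsPowerfullyCentralChain p n H) : IsPowerful p G := by
  obtain ⟨m, rfl⟩ := Nat.exists_eq_add_of_le' hn
  obtain ⟨-, htop, -, hcomm⟩ := h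
  have hm := hcomm m m.lt_succ_self
  rw [htop] at hm
  rw [IsPowerful, if_neg hp2, _root_.commutator_def]
  exact hm.trans (subgroupPow_mono le_top p)

end OmegaChain

theorem omega_statement_10 (p : ℕ) (hp : p.Prime) (hp2 : p ≠ 2) (G : Type*) [Group G]
    [Finite G] (hG : IsPGroup p G) (hpow : IsPowerful p G) (i : ℕ) (hi : 1 ≤ i) :
    IsPowerfullyNilpotent p ↥(omegaSubgroup p i (subgroupPow (⊤ : Subgroup G) p)) ∧
      powerfulNilpotencyClass p ↥(omegaSubgroup p i (subgroupPow (⊤ : Subgroup G) p)) ≤ i := by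
  have := Fact.mk hp
  have hF := hpow.isPowerCentralSeries hp2 hG
  have hchain := hF.isPowerfullyCentralChain_omegaChain (hp.odd_of_ne_two hp2)
    (hpow.isOmegaClosed hp2 hG) hi
  exact ⟨⟨hchain.isPowerful hp2 hi, i, _, hchain⟩, Nat.sInf_le ⟨_, hchain⟩⟩
end
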